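/- Let c > 0, d > 0 and 0 < q < 1 < p. Assume Ω admits a normalized first Dirichlet eigenpair (λ₁, φ₁) and a torsion function ξ. Then there exists a positive number μ₀ such that for every μ ∈ (0, μ₀) the Kirchhoff–Carrier problem −(1 + c‖u‖_2² + d‖∇u‖_2²) Δu = μ u^q + u^p in Ω, u > 0 in Ω, u = 0 on ∂Ω has at least one classical solution. -/

import Mathlib

open MeasureTheory Set Real
open scoped ENNReal NNReal

noncomputable section

/-- The Laplacian of `u : ℝ^N → ℝ`, as the sum of second partial derivatives. -/
def lapl {N : ℕ} (u : EuclideanSpace ℝ (Fin N) → ℝ) (x : EuclideanSpace ℝ (Fin N)) : ℝ :=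
  ∑ i : Fin N, fderiv ℝ (fun y => fderiv ℝ u y (EuclideanSpace.single i 1)) x
    (EuclideanSpace.single i 1)

/-- The `L^p` norm of `u` on `Ω`. -/
def LpNorm {N : ℕ} (Ω : Set (EuclideanSpace ℝ (Fin N))) (p : ℝ≥0∞)
    (u : EuclideanSpace ℝ (Fin N) → ℝ) : ℝ :=
  (eLpNorm u p (volume.restrict Ω)).toReal

/-- The `L²` norm of the gradient of `u` on `Ω`. -/
def gradNorm2 {N : ℕ} (Ω : Set (EuclideanSpace ℝ (Fin N)))
    (u : EuclideanSpace ℝ (Fin N) → ℝ) : ℝ :=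
  (eLpNorm (fun x => gradient u x) 2 (volume.restrict Ω)).toReal

/-- A torsion function of `Ω`: `ξ ∈ C(Ω̄) ∩ C²(Ω)`, `ξ ≥ 0` in `Ω`, `-Δξ = 1` in `Ω`,
`ξ = 0` on `∂Ω`. -/
def IsTorsionFn {N : ℕ} (Ω : Set (EuclideanSpace ℝ (Fin N)))
    (ξ : EuclideanSpace ℝ (Fin N) → ℝ) : Prop :=
  ContinuousOn ξ (closure Ω) ∧ ContDiffOn ℝ 2 ξ Ω ∧ (∀ x ∈ Ω, 0 ≤ ξ x) ∧
    (∀ x ∈ Ω, -lapl ξ x = 1) ∧ (∀ x ∈ frontier Ω, ξ x = 0)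

/-- A normalized first Dirichlet eigenpair of `Ω`: `λ₁ > 0`, `φ₁ ∈ C(Ω̄) ∩ C²(Ω)`, `φ₁ > 0`
in `Ω`, `-Δφ₁ = λ₁ φ₁` in `Ω`, `φ₁ = 0` on `∂Ω`, and `max_{Ω̄} φ₁ = 1`. -/
def IsFirstEigenpair {N : ℕ} (Ω : Set (EuclideanSpace ℝ (Fin N)))
    (l : ℝ) (φ₁ : EuclideanSpace ℝ (Fin N) → ℝ) : Prop :=
  0 < l ∧ ContinuousOn φ₁ (closure Ω) ∧ ContDiffOn ℝ 2 φ₁ Ω ∧ (∀ x ∈ Ω, 0 < φ₁ x) ∧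
    (∀ x ∈ Ω, -lapl φ₁ x = l * φ₁ x) ∧ (∀ x ∈ frontier Ω, φ₁ x = 0) ∧
    IsGreatest (φ₁ '' closure Ω) 1

/-!
For a fixed coefficient `M = 1 + c‖u‖₂² + d‖∇u‖₂²` the problem is the semilinear equation
`-M Δu = F(u)` with `F(s) = μ s ^ q + s ^ p`. For small `μ` a multiple `tξ` of the torsion function
is a supersolution, and monotone iteration from `tξ` yields the maximal solution `u_M` below `tξ`.
On the range of `tξ` the concave term dominates, so `F` is subhomogeneous of some degree `α < 1`;
comparing `u_M` with multiples of `u_{M'}` shows that `u_M` depends continuously on `M`.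

Green's identity gives `‖∇u_M‖₂² = ∫ F(u_M) u_M / M`, so `1 + c‖u_M‖₂² + d‖∇u_M‖₂²` is a bounded
continuous function of `M ≥ 1` with values in `[1, ∞)`, and by the intermediate value theorem some
`M` equals its own coefficient. Positivity of `u_M` follows from `F(s)/s → ∞` as `s → 0⁺`: small
multiples of the cubic bump `(r² - |x - x₀|²)₊³` are subsolutions.

No boundary regularity is needed to solve `-Δw = g`: a Kato type inequality bounds `|∫ g ψ|` by
`‖g‖_∞ ∫ ξ |Δψ|` for test functions `ψ`, so Hahn–Banach and Riesz representation give a weak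
solution with `|w| ≤ ‖g‖_∞ ξ`, which therefore vanishes continuously at the boundary. Interior
regularity comes from the mean value formula, averages of `w` at a fixed scale being smooth.
-/

section

open Filter Metric Topology
open scoped ContDiff InnerProductSpace

/-- Bounded measurable real functions, the class on which the averaging operators act. -/
structure BoundedMeasurable {α : Type*} [MeasurableSpace α] (w : α → ℝ) : Prop where
  measurable : Measurable w
  bounded : ∃ C, ∀ x, |w x| ≤ C

namespace BoundedMeasurable

variable {α : Type*} [MeasurableSpace α] {w v : α → ℝ}

lemma const (a : ℝ) : BoundedMeasurable fun _ : α => a :=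
  ⟨measurable_const, |a|, fun _ => le_rfl⟩

lemma add (hw : BoundedMeasurable w) (hv : BoundedMeasurable v) :
    BoundedMeasurable fun x => w x + v x := by
  obtain ⟨hwm, C, hC⟩ := hw
  obtain ⟨hvm, D, hD⟩ := hv
  exact ⟨hwm.add hvm, C + D, fun x => (abs_add_le _ _).trans (add_le_add (hC x) (hD x))⟩

lemma const_mul (hw : BoundedMeasurable w) (a : ℝ) : BoundedMeasurable fun x => a * w x := by
  obtain ⟨hwm, C, hC⟩ := hw
  refine ⟨hwm.const_mul a, |a| * C, fun x => ?_⟩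
  rw [abs_mul]
  exact mul_le_mul_of_nonneg_left (hC x) (abs_nonneg a)

lemma of_hasCompactSupport [TopologicalSpace α] [OpensMeasurableSpace α] (hw : Continuous w)
    (hc : HasCompactSupport w) : BoundedMeasurable w :=
  ⟨hw.measurable, hc.exists_bound_of_continuous hw⟩

lemma locallyIntegrable [TopologicalSpace α] {μ : Measure α}
    [IsLocallyFiniteMeasure μ] (hw : BoundedMeasurable w) :
    LocallyIntegrable w μ := by
  obtain ⟨hwm, C, hC⟩ := hw
  exact (locallyIntegrable_const C).mono hwm.aestronglyMeasurable
    (ae_of_all _ fun x => (hC x).trans (le_abs_self C))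

end BoundedMeasurable

section Kernels

variable {E F : Type*} [NormedAddCommGroup E] [NormedAddCommGroup F]

/-- A continuous kernel supported in the closed unit ball. -/
structure IsBallKernel (k : E → F) : Prop where
  continuous : Continuous k
  tsupport_subset : tsupport k ⊆ closedBall 0 1

namespace IsBallKernel

variable {k : E → F} (hk : IsBallKernel k)

include hk

lemma eq_zero {y : E} (hy : 1 < ‖y‖) : k y = 0 :=
  image_eq_zero_of_notMem_tsupport fun h => hy.not_ge (by simpa using hk.tsupport_subset h)

lemma hasCompactSupport [ProperSpace E] : HasCompactSupport k :=
  (isCompact_closedBall 0 1).of_isClosed_subset (isClosed_tsupport k) hk.tsupport_subset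

lemma fderiv [NormedSpace ℝ E] [NormedSpace ℝ F] (hC1 : ContDiff ℝ 1 k) :
    IsBallKernel (fderiv ℝ k) :=
  ⟨hC1.continuous_fderiv one_ne_zero, (tsupport_fderiv_subset ℝ).trans hk.tsupport_subset⟩

end IsBallKernel

lemma isBallKernel_of_eq_zero {k : E → F} (hk : Continuous k) (h0 : ∀ y, 1 < ‖y‖ → k y = 0) :
    IsBallKernel k :=
  ⟨hk, closure_minimal (fun y hy => by simpa using not_lt.1 (mt (h0 y) hy)) isClosed_closedBall⟩

lemma IsBallKernel.const_mul {k : E → ℝ} (hk : IsBallKernel k) (a : ℝ) :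
    IsBallKernel fun y => a * k y :=
  isBallKernel_of_eq_zero (hk.continuous.const_mul a) fun y hy => by rw [hk.eq_zero hy, mul_zero]

lemma add_smul_mem_closedBall [NormedSpace ℝ E] {x y : E} {t : ℝ} (ht : 0 ≤ t) (hy : ‖y‖ ≤ 1) :
    x + t • y ∈ closedBall x t := by
  simpa [norm_smul, abs_of_nonneg ht] using mul_le_of_le_one_right ht hy

section Bump

/-- The standard smooth bump on the unit ball. -/
def bumpProfile (y : E) : ℝ := expNegInvGlue (1 - ‖y‖ ^ 2)

/-- The radial density `ρ` with `∇ (bumpProfile) = -ρ(y) y`. -/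
def bumpDensity (y : E) : ℝ :=
  2 * ((1 - ‖y‖ ^ 2)⁻¹ ^ 2 * expNegInvGlue (1 - ‖y‖ ^ 2))

lemma bumpProfile_nonneg (y : E) : 0 ≤ bumpProfile y := expNegInvGlue.nonneg _

lemma bumpDensity_nonneg (y : E) : 0 ≤ bumpDensity y :=
  mul_nonneg zero_le_two (mul_nonneg (sq_nonneg _) (expNegInvGlue.nonneg _))

variable [InnerProductSpace ℝ E]

lemma bumpProfile_contDiff : ContDiff ℝ ∞ (bumpProfile : E → ℝ) :=
  (expNegInvGlue.contDiff (n := ⊤)).comp (contDiff_const.sub (contDiff_norm_sq ℝ))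

lemma bumpDensity_contDiff : ContDiff ℝ ∞ (bumpDensity : E → ℝ) := by
  have h := expNegInvGlue.contDiff_polynomial_eval_inv_mul (n := ⊤) (Polynomial.X ^ 2)
  simp only [Polynomial.eval_pow, Polynomial.eval_X] at h
  exact contDiff_const.mul (h.comp (contDiff_const.sub (contDiff_norm_sq ℝ)))

lemma isBallKernel_bumpProfile : IsBallKernel (bumpProfile : E → ℝ) :=
  isBallKernel_of_eq_zero bumpProfile_contDiff.continuous fun y hy =>
    expNegInvGlue.zero_of_nonpos (by nlinarith)

lemma isBallKernel_bumpDensity : IsBallKernel (bumpDensity : E → ℝ) :=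
  isBallKernel_of_eq_zero bumpDensity_contDiff.continuous fun y hy => by
    rw [bumpDensity, expNegInvGlue.zero_of_nonpos (by nlinarith), mul_zero, mul_zero]

lemma hasFDerivAt_bumpProfile (y : E) :
    HasFDerivAt bumpProfile (-(bumpDensity y) • innerSL ℝ y) y := by
  have h_glue := expNegInvGlue.hasDerivAt_polynomial_eval_inv_mul 1 (1 - ‖y‖ ^ 2)
  simp only [Polynomial.eval_one, one_mul, Polynomial.derivative_one, sub_zero, mul_one,
    Polynomial.eval_pow, Polynomial.eval_X] at h_glue
  have h_norm := (hasStrictFDerivAt_norm_sq y).hasFDerivAt.const_sub 1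
  refine (h_glue.comp_hasFDerivAt y h_norm).congr_fderiv ?_
  ext e
  simp only [bumpDensity, smul_apply, neg_apply, coe_innerSL_apply, smul_eq_mul, nsmul_eq_mul]
  push_cast
  ring

variable [FiniteDimensional ℝ E] [MeasurableSpace E] [BorelSpace E]

lemma IsBallKernel.integrable {k : E → F} (hk : IsBallKernel k) : Integrable k :=
  hk.continuous.integrable_of_hasCompactSupport hk.hasCompactSupport

lemma IsBallKernel.integral_pos {k : E → ℝ} (hk : IsBallKernel k) (h0 : ∀ y, 0 ≤ k y)
    (hpos : 0 < k 0) : 0 < ∫ y, k y := by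
  rw [integral_pos_iff_support_of_nonneg h0 hk.integrable]
  exact hk.continuous.isOpen_support.measure_pos volume ⟨0, hpos.ne'⟩

lemma integral_bumpDensity_pos : 0 < ∫ y : E, bumpDensity y :=
  isBallKernel_bumpDensity.integral_pos bumpDensity_nonneg
    (by simpa [bumpDensity] using expNegInvGlue.pos_of_pos one_pos)

/-- The radial mollifier `ρ`, of integral `1`. -/
def mollifier (y : E) : ℝ := (∫ z : E, bumpDensity z)⁻¹ * bumpDensity y

/-- The kernel `κ` with `∇κ(y) = -ρ(y) y`, where `ρ` is the mollifier. It turns the derivative of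
an average with respect to its radius into an average of the Laplacian. -/
def potentialKernel (y : E) : ℝ := (∫ z : E, bumpDensity z)⁻¹ * bumpProfile y

lemma isBallKernel_mollifier : IsBallKernel (mollifier : E → ℝ) :=
  isBallKernel_bumpDensity.const_mul _

lemma isBallKernel_potentialKernel : IsBallKernel (potentialKernel : E → ℝ) :=
  isBallKernel_bumpProfile.const_mul _

lemma mollifier_contDiff : ContDiff ℝ ∞ (mollifier : E → ℝ) :=
  contDiff_const.mul bumpDensity_contDiff

lemma potentialKernel_contDiff : ContDiff ℝ ∞ (potentialKernel : E → ℝ) :=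
  contDiff_const.mul bumpProfile_contDiff

lemma mollifier_nonneg (y : E) : 0 ≤ mollifier y :=
  mul_nonneg (inv_nonneg.2 integral_bumpDensity_pos.le) (bumpDensity_nonneg y)

lemma potentialKernel_nonneg (y : E) : 0 ≤ potentialKernel y :=
  mul_nonneg (inv_nonneg.2 integral_bumpDensity_pos.le) (bumpProfile_nonneg y)

lemma integral_mollifier : ∫ y : E, mollifier y = 1 := by
  simp only [mollifier, integral_const_mul]
  exact inv_mul_cancel₀ integral_bumpDensity_pos.ne'

lemma integral_potentialKernel_pos : 0 < ∫ y : E, potentialKernel y :=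
  isBallKernel_potentialKernel.integral_pos potentialKernel_nonneg
    (mul_pos (inv_pos.2 integral_bumpDensity_pos)
      (by simpa [bumpProfile] using expNegInvGlue.pos_of_pos one_pos))

lemma hasFDerivAt_potentialKernel (y : E) :
    HasFDerivAt potentialKernel (-(mollifier y) • innerSL ℝ y) y := by
  refine ((hasFDerivAt_bumpProfile y).const_mul _).congr_fderiv ?_
  rw [smul_smul, mollifier, mul_neg]

end Bump

end Kernels

section KernelAverages

variable {E F G : Type*} [NormedAddCommGroup E] [InnerProductSpace ℝ E] [FiniteDimensional ℝ E]
  [MeasurableSpace E] [BorelSpace E] [NormedAddCommGroup F] [NormedSpace ℝ F]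

/-- The average of `w` around `x` at scale `t` against the (possibly vector valued) kernel `k`. -/
def kernelAvg (k : E → F) (t : ℝ) (w : E → ℝ) (x : E) : F := ∫ y, w (x + t • y) • k y

/-- The average of `w` around `x` at scale `t` against the mollifier. -/
abbrev mollify (t : ℝ) (w : E → ℝ) (x : E) : ℝ := kernelAvg mollifier t w x

/-- The potential of the mass distribution `g` near `x`: the mean value formula for `-Δw = g`
reads `w x = mollify t w x + localPotential t g x`. -/
def localPotential (t : ℝ) (g : E → ℝ) (x : E) : ℝ :=
  ∫ s in (0 : ℝ)..t, s * kernelAvg potentialKernel s g x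

variable (E) in
/-- The constant `b` in `localPotential t 1 = b t²`. -/
def potentialConst : ℝ := (∫ y : E, potentialKernel y) / 2

lemma potentialConst_pos : 0 < potentialConst E := half_pos integral_potentialKernel_pos

variable {k : E → F} {w v : E → ℝ} {t C : ℝ} {x : E}

lemma kernelAvg_integrable (hk : IsBallKernel k) (hw : BoundedMeasurable w) (t : ℝ) (x : E) :
    Integrable fun y => w (x + t • y) • k y := by
  obtain ⟨hwm, C, hC⟩ := hw
  exact hk.integrable.bdd_smul C (hwm.comp (by fun_prop)).aestronglyMeasurable
    (ae_of_all _ fun y => hC _)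

lemma kernelAvg_congr (hk : IsBallKernel k) (ht : 0 ≤ t)
    (h : ∀ z ∈ closedBall x t, w z = v z) : kernelAvg k t w x = kernelAvg k t v x := by
  refine integral_congr_ae (ae_of_all _ fun y => ?_)
  rcases lt_or_ge 1 ‖y‖ with hy | hy
  · simp only [hk.eq_zero hy, smul_zero]
  · simp only [h _ (add_smul_mem_closedBall ht hy)]

lemma kernelAvg_add (hk : IsBallKernel k) (hw : BoundedMeasurable w) (hv : BoundedMeasurable v)
    (t : ℝ) (x : E) :
    kernelAvg k t (fun z => w z + v z) x = kernelAvg k t w x + kernelAvg k t v x := by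
  simp only [kernelAvg, add_smul]
  exact integral_add (kernelAvg_integrable hk hw t x) (kernelAvg_integrable hk hv t x)

lemma kernelAvg_const_mul (k : E → F) (w : E → ℝ) (a t : ℝ) (x : E) :
    kernelAvg k t (fun z => a * w z) x = a • kernelAvg k t w x := by
  simp only [kernelAvg, mul_smul, integral_smul]

lemma kernelAvg_const (k : E → F) (a t : ℝ) (x : E) :
    kernelAvg k t (fun _ => a) x = a • ∫ y, k y :=
  integral_smul a k

lemma mollify_const (a t : ℝ) (x : E) : mollify t (fun _ => a) x = a :=
  (kernelAvg_const mollifier a t x).trans (by rw [integral_mollifier, smul_eq_mul, mul_one])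

lemma norm_kernelAvg_le (hk : IsBallKernel k) (hC : ∀ x, |w x| ≤ C) (t : ℝ) (x : E) :
    ‖kernelAvg k t w x‖ ≤ C * ∫ y, ‖k y‖ := by
  rw [← integral_const_mul]
  refine norm_integral_le_of_norm_le (hk.integrable.norm.const_mul C) (ae_of_all _ fun y => ?_)
  rw [norm_smul]
  exact mul_le_mul_of_nonneg_right (hC _) (norm_nonneg _)

lemma kernelAvg_stronglyMeasurable (hk : IsBallKernel k) (hw : Measurable w) :
    StronglyMeasurable fun q : ℝ × E => kernelAvg k q.1 w q.2 := by
  have h_w : StronglyMeasurable fun r : (ℝ × E) × E => w (r.1.2 + r.1.1 • r.2) :=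
    (hw.comp (by fun_prop)).stronglyMeasurable
  exact (h_w.smul (hk.continuous.stronglyMeasurable.comp_measurable
    measurable_snd)).integral_prod_right'

section NonnegKernel

variable {k : E → ℝ}

lemma kernelAvg_mono (hk : IsBallKernel k) (h0 : ∀ y, 0 ≤ k y) (hw : BoundedMeasurable w)
    (hv : BoundedMeasurable v) (ht : 0 ≤ t) (h : ∀ z ∈ closedBall x t, w z ≤ v z) :
    kernelAvg k t w x ≤ kernelAvg k t v x := by
  refine integral_mono (kernelAvg_integrable hk hw t x) (kernelAvg_integrable hk hv t x) fun y => ?_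
  rcases lt_or_ge 1 ‖y‖ with hy | hy
  · simp only [hk.eq_zero hy, smul_zero, le_refl]
  · exact mul_le_mul_of_nonneg_right (h _ (add_smul_mem_closedBall ht hy)) (h0 y)

lemma BoundedMeasurable.kernelAvg (hk : IsBallKernel k) (hw : BoundedMeasurable w) (t : ℝ) :
    BoundedMeasurable (kernelAvg k t w) := by
  obtain ⟨hwm, C, hC⟩ := hw
  exact ⟨(kernelAvg_stronglyMeasurable hk hwm).measurable.comp
    (measurable_const.prodMk measurable_id), _, fun x => norm_kernelAvg_le hk hC t x⟩

lemma kernelAvg_comm {j : E → ℝ} (hk : IsBallKernel k) (hj : IsBallKernel j)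
    (hw : BoundedMeasurable w) (s t : ℝ) (x : E) :
    kernelAvg k s (kernelAvg j t w) x = kernelAvg j t (kernelAvg k s w) x := by
  obtain ⟨hwm, C, hC⟩ := hw
  have h_prod : Integrable (fun q : E × E => w (x + s • q.1 + t • q.2) • j q.2 • k q.1)
      (volume.prod volume) := by
    have h := (hk.integrable.mul_prod hj.integrable).bdd_mul
      (hwm.comp (g := w) (f := fun q : E × E => x + s • q.1 + t • q.2)
        (by fun_prop)).aestronglyMeasurable (ae_of_all _ fun _ => hC _)
    refine h.congr (ae_of_all _ fun q => ?_)
    simp only [Function.comp_apply, smul_eq_mul]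
    ring
  simp only [kernelAvg, ← integral_smul_const, smul_assoc]
  rw [integral_integral_swap h_prod]
  simp only [add_right_comm x, smul_eq_mul, mul_comm (j _)]

end NonnegKernel

lemma potentialKernel_intervalIntegrable (hw : BoundedMeasurable w) (x : E) (a b : ℝ) :
    IntervalIntegrable (fun s => s * kernelAvg potentialKernel s w x) volume a b := by
  obtain ⟨hwm, C, hC⟩ := hw
  have h_meas : Measurable fun s : ℝ => kernelAvg potentialKernel s w x :=
    (kernelAvg_stronglyMeasurable isBallKernel_potentialKernel hwm).measurable.comp
      (measurable_id.prodMk measurable_const)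
  have h_int : IntervalIntegrable (fun s => kernelAvg potentialKernel s w x) volume a b :=
    intervalIntegrable_iff.2 <| Measure.integrableOn_of_bounded (by simp)
      h_meas.aestronglyMeasurable
      (ae_of_all _ fun s => norm_kernelAvg_le isBallKernel_potentialKernel hC s x)
  exact h_int.continuousOn_mul continuousOn_id

lemma localPotential_congr (ht : 0 ≤ t) (h : ∀ z ∈ closedBall x t, w z = v z) :
    localPotential t w x = localPotential t v x := by
  refine intervalIntegral.integral_congr fun s hs => ?_
  rw [uIcc_of_le ht] at hs
  simp only [kernelAvg_congr isBallKernel_potentialKernel hs.1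
    fun z hz => h z (closedBall_subset_closedBall hs.2 hz)]

lemma localPotential_mono (hw : BoundedMeasurable w) (hv : BoundedMeasurable v) (ht : 0 ≤ t)
    (h : ∀ z ∈ closedBall x t, w z ≤ v z) : localPotential t w x ≤ localPotential t v x :=
  intervalIntegral.integral_mono_on ht (potentialKernel_intervalIntegrable hw x 0 t)
    (potentialKernel_intervalIntegrable hv x 0 t) fun _ hs =>
      mul_le_mul_of_nonneg_left (kernelAvg_mono isBallKernel_potentialKernel potentialKernel_nonneg
        hw hv hs.1 fun z hz => h z (closedBall_subset_closedBall hs.2 hz)) hs.1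

lemma localPotential_const (a t : ℝ) (x : E) :
    localPotential t (fun _ => a) x = potentialConst E * a * t ^ 2 := by
  simp only [localPotential, kernelAvg_const, smul_eq_mul, intervalIntegral.integral_mul_const,
    integral_id, potentialConst]
  ring

lemma localPotential_add (hw : BoundedMeasurable w) (hv : BoundedMeasurable v) (t : ℝ) (x : E) :
    localPotential t (fun z => w z + v z) x = localPotential t w x + localPotential t v x := by
  simp only [localPotential, kernelAvg_add isBallKernel_potentialKernel hw hv, mul_add]
  exact intervalIntegral.integral_add (potentialKernel_intervalIntegrable hw x 0 t)
    (potentialKernel_intervalIntegrable hv x 0 t)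

lemma localPotential_const_mul (w : E → ℝ) (a t : ℝ) (x : E) :
    localPotential t (fun z => a * w z) x = a * localPotential t w x := by
  simp only [localPotential, kernelAvg_const_mul, smul_eq_mul, mul_left_comm _ a,
    intervalIntegral.integral_const_mul]

lemma abs_localPotential_le (hw : Measurable w) (hC : ∀ x, |w x| ≤ C) (ht : 0 ≤ t) (x : E) :
    |localPotential t w x| ≤ potentialConst E * C * t ^ 2 := by
  have h_bdd : BoundedMeasurable w := ⟨hw, C, hC⟩
  have h_lower := localPotential_mono (x := x) (.const (-C)) h_bdd ht fun z _ => (abs_le.1 (hC z)).1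
  have h_upper := localPotential_mono (x := x) h_bdd (.const C) ht fun z _ => (abs_le.1 (hC z)).2
  rw [localPotential_const] at h_lower h_upper
  exact abs_le.2 ⟨by linarith, h_upper⟩

lemma kernelAvg_eq_integral_dilation (k : E → F) (ht : 0 < t) (w : E → ℝ) (x : E) :
    kernelAvg k t w x
      = (t ^ Module.finrank ℝ E)⁻¹ • ∫ z, w z • k (t⁻¹ • (z - x)) := by
  have h_scale := Measure.integral_comp_smul (volume : Measure E)
    (fun y => w (x + y) • k (t⁻¹ • y)) t
  simp only [smul_smul, inv_mul_cancel₀ ht.ne', one_smul] at h_scale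
  rw [kernelAvg, h_scale, abs_of_pos (by positivity),
    ← integral_add_left_eq_self (μ := (volume : Measure E))
      (fun z => w z • k (t⁻¹ • (z - x))) x]
  simp only [add_sub_cancel_left]

end KernelAverages

lemma integrable_mul_of_tsupport_subset {X : Type*} [TopologicalSpace X] [MeasurableSpace X]
    [OpensMeasurableSpace X] {μ : Measure X} [IsFiniteMeasureOnCompacts μ] {Ω : Set X} {f ψ : X → ℝ}
    (hΩ : IsOpen Ω)
    (hf : ContinuousOn f Ω) (hψ : Continuous ψ) (hc : HasCompactSupport ψ)
    (hs : tsupport ψ ⊆ Ω) : Integrable (fun x => f x * ψ x) μ := by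
  have h_cont : Continuous fun x => f x * ψ x :=
    continuous_of_tsupport fun x hx =>
      (hf.continuousAt (hΩ.mem_nhds (hs (tsupport_mul_subset_right hx)))).mul hψ.continuousAt
  exact h_cont.integrable_of_hasCompactSupport hc.mul_left

section DirectionalDerivatives

variable {E : Type*} [NormedAddCommGroup E] [NormedSpace ℝ E] {φ f ψ : E → ℝ}

lemma contDiff_fderiv_apply {n m : WithTop ℕ∞} (hφ : ContDiff ℝ n φ) (hmn : m + 1 ≤ n) (e : E) :
    ContDiff ℝ m fun x => fderiv ℝ φ x e :=
  (hφ.fderiv_right hmn).clm_apply contDiff_const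

lemma contDiffOn_fderiv_apply {n m : WithTop ℕ∞} {Ω : Set E} (hΩ : IsOpen Ω)
    (hφ : ContDiffOn ℝ n φ Ω) (hmn : m + 1 ≤ n) (e : E) :
    ContDiffOn ℝ m (fun x => fderiv ℝ φ x e) Ω :=
  (hφ.fderiv_of_isOpen hΩ hmn).clm_apply contDiffOn_const

lemma fderiv_comp_smul_sub (hf : Differentiable ℝ f) (a : ℝ) (x z e : E) :
    fderiv ℝ (fun z => f (a • (z - x))) z e = a * fderiv ℝ f (a • (z - x)) e := by
  have h_inner : HasFDerivAt (fun z : E => a • (z - x)) (a • ContinuousLinearMap.id ℝ E) z :=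
    ((hasFDerivAt_id z).sub_const x).const_smul a
  have h_comp : HasFDerivAt (fun z => f (a • (z - x))) _ z := (hf _).hasFDerivAt.comp z h_inner
  rw [h_comp.fderiv]
  simp

variable [MeasurableSpace E] [BorelSpace E] {Ω : Set E} {μ : Measure E}

lemma integral_mul_fderiv_of_tsupport_subset [FiniteDimensional ℝ E] [μ.IsAddHaarMeasure]
    (hΩ : IsOpen Ω) (hf : ContDiffOn ℝ 1 f Ω) (hψ : ContDiff ℝ 1 ψ) (hc : HasCompactSupport ψ)
    (hs : tsupport ψ ⊆ Ω) (e : E) :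
    ∫ x, f x * fderiv ℝ ψ x e ∂μ = -∫ x, fderiv ℝ f x e * ψ x ∂μ := by
  have hψ' := (contDiff_fderiv_apply hψ (m := 0) (by norm_num) e).continuous
  have hs' := (tsupport_fderiv_apply_subset ℝ e).trans hs
  have hf' := (contDiffOn_fderiv_apply hΩ hf (m := 0) (by norm_num) e).continuousOn
  exact integral_mul_fderiv_eq_neg_fderiv_mul_of_integrable
    (integrable_mul_of_tsupport_subset hΩ hf' hψ.continuous hc hs)
    (integrable_mul_of_tsupport_subset hΩ hf.continuousOn hψ'
      (hc.fderiv_apply ℝ e) hs')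
    (integrable_mul_of_tsupport_subset hΩ hf.continuousOn hψ.continuous hc hs)
    (fun x hx => (hf.differentiableOn one_ne_zero).differentiableAt (hΩ.mem_nhds (hs hx)))
    fun x _ => hψ.differentiable one_ne_zero x

end DirectionalDerivatives

section Laplacian

variable {N : ℕ} {φ f w : EuclideanSpace ℝ (Fin N) → ℝ} {Ω : Set (EuclideanSpace ℝ (Fin N))}

lemma continuous_lapl (hφ : ContDiff ℝ 2 φ) : Continuous (lapl φ) :=
  continuous_finsetSum _ fun _ _ => (contDiff_fderiv_apply
    (contDiff_fderiv_apply hφ (m := 1) (by norm_num) _) (m := 0) (by norm_num) _).continuous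

lemma continuousOn_lapl (hΩ : IsOpen Ω) (hw : ContDiffOn ℝ 2 w Ω) : ContinuousOn (lapl w) Ω :=
  continuousOn_finsetSum _ fun _ _ => (contDiffOn_fderiv_apply hΩ
    (contDiffOn_fderiv_apply hΩ hw (m := 1) (by norm_num) _) (m := 0) (by norm_num) _).continuousOn

lemma tsupport_lapl_subset (φ : EuclideanSpace ℝ (Fin N) → ℝ) :
    tsupport (lapl φ) ⊆ tsupport φ := by
  refine closure_minimal (fun x hx => ?_) (isClosed_tsupport φ)
  obtain ⟨i, -, hi⟩ := Finset.exists_ne_zero_of_sum_ne_zero hx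
  exact tsupport_fderiv_apply_subset ℝ _ (tsupport_fderiv_apply_subset ℝ _
    (subset_tsupport (fun y => fderiv ℝ (fun z => fderiv ℝ φ z (EuclideanSpace.single i 1)) y
      (EuclideanSpace.single i 1)) hi))

lemma hasCompactSupport_lapl {φ : EuclideanSpace ℝ (Fin N) → ℝ} (hc : HasCompactSupport φ) :
    HasCompactSupport (lapl φ) :=
  hc.of_isClosed_subset (isClosed_tsupport _) (tsupport_lapl_subset φ)

lemma lapl_eq_of_eqOn (hΩ : IsOpen Ω) (h : EqOn f w Ω) : EqOn (lapl f) (lapl w) Ω := by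
  have h_fderiv {f w : EuclideanSpace ℝ (Fin N) → ℝ} (h : EqOn f w Ω) (e) :
      EqOn (fun x => fderiv ℝ f x e) (fun x => fderiv ℝ w x e) Ω := fun x hx => by
    simp only [(h.eventuallyEq_of_mem (hΩ.mem_nhds hx)).fderiv_eq]
  exact fun x hx => Finset.sum_congr rfl fun i _ => h_fderiv (h_fderiv h _) _ hx

lemma lapl_const_mul (a : ℝ) (hw : ContDiff ℝ 2 w) (x : EuclideanSpace ℝ (Fin N)) :
    lapl (fun z => a * w z) x = a * lapl w x := by
  have h_fderiv {f : EuclideanSpace ℝ (Fin N) → ℝ} (hf : Differentiable ℝ f) (e y) :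
      fderiv ℝ (fun z => a * f z) y e = a * fderiv ℝ f y e := by
    rw [fderiv_const_mul (hf y)]; rfl
  simp only [lapl, Finset.mul_sum, h_fderiv (hw.differentiable two_ne_zero), h_fderiv
    ((contDiff_fderiv_apply hw (m := 1) (by norm_num) _).differentiable one_ne_zero)]

lemma lapl_add {v : EuclideanSpace ℝ (Fin N) → ℝ} (hw : ContDiff ℝ 2 w) (hv : ContDiff ℝ 2 v)
    (x : EuclideanSpace ℝ (Fin N)) : lapl (fun z => w z + v z) x = lapl w x + lapl v x := by
  have h_fderiv {f h : EuclideanSpace ℝ (Fin N) → ℝ} (hf : Differentiable ℝ f)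
      (hh : Differentiable ℝ h) (e y) :
      fderiv ℝ (fun z => f z + h z) y e = fderiv ℝ f y e + fderiv ℝ h y e := by
    rw [fderiv_fun_add (hf y) (hh y)]; rfl
  have h_diff {f : EuclideanSpace ℝ (Fin N) → ℝ} (hf : ContDiff ℝ 2 f) (e) :=
    (contDiff_fderiv_apply hf (m := 1) (by norm_num) e).differentiable one_ne_zero
  simp only [lapl, h_fderiv (hw.differentiable two_ne_zero) (hv.differentiable two_ne_zero),
    h_fderiv (h_diff hw _) (h_diff hv _), Finset.sum_add_distrib]

lemma lapl_comp_smul_sub (hf : ContDiff ℝ 2 f) (a : ℝ) (x z : EuclideanSpace ℝ (Fin N)) :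
    lapl (fun z => f (a • (z - x))) z = a ^ 2 * lapl f (a • (z - x)) := by
  simp only [lapl, Finset.mul_sum, fderiv_comp_smul_sub (hf.differentiable two_ne_zero)]
  refine Finset.sum_congr rfl fun i _ => ?_
  have hf' := (contDiff_fderiv_apply hf (m := 1) (by norm_num)
    (EuclideanSpace.single i 1)).differentiable one_ne_zero
  have h_diff : DifferentiableAt ℝ
      (fun z => fderiv ℝ f (a • (z - x)) (EuclideanSpace.single i 1)) z :=
    (hf' _).comp z (by fun_prop)
  rw [fderiv_const_mul h_diff, smul_apply, smul_eq_mul,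
    fderiv_comp_smul_sub hf' a x z, sq, mul_assoc]

lemma integral_mul_lapl (hΩ : IsOpen Ω) (hw : ContDiffOn ℝ 2 w Ω) (hφ : ContDiff ℝ 2 φ)
    (hc : HasCompactSupport φ) (hs : tsupport φ ⊆ Ω) :
    ∫ x, w x * lapl φ x = ∫ x, lapl w x * φ x := by
  have hw' := fun e => contDiffOn_fderiv_apply hΩ hw (m := 1) (by norm_num) e
  have hw'' := fun e =>
    (contDiffOn_fderiv_apply hΩ (hw' e) (m := 0) (by norm_num) e).continuousOn
  have hφ' := fun e => contDiff_fderiv_apply hφ (m := 1) (by norm_num) e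
  have hφ'' := fun e => (contDiff_fderiv_apply (hφ' e) (m := 0) (by norm_num) e).continuous
  have hs' := fun e => (tsupport_fderiv_apply_subset ℝ e).trans hs
  have hc' := fun e => hc.fderiv_apply ℝ e
  simp only [lapl, Finset.mul_sum, Finset.sum_mul]
  rw [integral_finsetSum _ fun i _ => ?_, integral_finsetSum _ fun i _ => ?_]
  · refine Finset.sum_congr rfl fun i _ => ?_
    rw [integral_mul_fderiv_of_tsupport_subset hΩ (hw.of_le one_le_two) (hφ' _) (hc' _) (hs' _),
      integral_mul_fderiv_of_tsupport_subset hΩ (hw' _) (hφ.of_le one_le_two) hc hs, neg_neg]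
  · exact integrable_mul_of_tsupport_subset hΩ (hw'' _) hφ.continuous hc hs
  · exact integrable_mul_of_tsupport_subset hΩ hw.continuousOn (hφ'' _)
      ((hc' _).fderiv_apply ℝ _) ((tsupport_fderiv_apply_subset ℝ _).trans (hs' _))

lemma lapl_potentialKernel (y : EuclideanSpace ℝ (Fin N)) :
    lapl potentialKernel y = -(N * mollifier y + fderiv ℝ mollifier y y) := by
  have h_fderiv (i : Fin N) : (fun z : EuclideanSpace ℝ (Fin N) =>
      fderiv ℝ potentialKernel z (EuclideanSpace.single i 1)) = fun z => -(mollifier z * z i) := by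
    ext z
    rw [(hasFDerivAt_potentialKernel z).fderiv]
    simp [EuclideanSpace.inner_single_right]
  have h_fderiv₂ (i : Fin N) : fderiv ℝ (fun z : EuclideanSpace ℝ (Fin N) => -(mollifier z * z i)) y
      (EuclideanSpace.single i 1)
        = -(mollifier y + fderiv ℝ mollifier y (y i • EuclideanSpace.single i 1)) := by
    have h_proj : HasFDerivAt (fun z : EuclideanSpace ℝ (Fin N) => z i)
        (EuclideanSpace.proj (𝕜 := ℝ) i) y := (EuclideanSpace.proj (𝕜 := ℝ) i).hasFDerivAt
    have h_moll := (mollifier_contDiff.differentiable (by simp) y).hasFDerivAt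
    have h_prod : HasFDerivAt (fun z : EuclideanSpace ℝ (Fin N) => -(mollifier z * z i)) _ y :=
      (h_moll.mul h_proj).neg
    rw [h_prod.fderiv]
    simp
  have h_basis : ∑ i : Fin N, y i • EuclideanSpace.single i (1 : ℝ) = y := by
    ext j
    simp [Pi.single_apply]
  simp only [lapl, h_fderiv, h_fderiv₂, Finset.sum_neg_distrib, Finset.sum_add_distrib, ← map_sum,
    h_basis, Finset.sum_const, Finset.card_univ, Fintype.card_fin, nsmul_eq_mul]

end Laplacian

section WeakSolutions

variable {N : ℕ} {k w g φ : EuclideanSpace ℝ (Fin N) → ℝ} {Ω : Set (EuclideanSpace ℝ (Fin N))}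
  {x : EuclideanSpace ℝ (Fin N)} {r s t : ℝ}

/-- Distributional solutions of `-Δw = g` in `Ω`. -/
def IsWeakSolution (Ω : Set (EuclideanSpace ℝ (Fin N)))
    (w g : EuclideanSpace ℝ (Fin N) → ℝ) : Prop :=
  ∀ φ : EuclideanSpace ℝ (Fin N) → ℝ, ContDiff ℝ ∞ φ → HasCompactSupport φ → tsupport φ ⊆ Ω →
    ∫ x, w x * lapl φ x = -∫ x, g x * φ x

/-- Solutions of `-Δw = g` in `Ω` in the sense of the mean value formula on balls. -/
def IsMeanValueSolution (Ω : Set (EuclideanSpace ℝ (Fin N)))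
    (w g : EuclideanSpace ℝ (Fin N) → ℝ) : Prop :=
  ∀ x ∈ Ω, ∀ t > 0, closedBall x t ⊆ Ω → w x = mollify t w x + localPotential t g x

lemma isWeakSolution_of_contDiffOn (hΩ : IsOpen Ω) (hw : ContDiffOn ℝ 2 w Ω)
    (hg : ∀ x ∈ Ω, -lapl w x = g x) : IsWeakSolution Ω w g := by
  intro φ hφ hc hs
  rw [integral_mul_lapl hΩ hw (hφ.of_le (by norm_cast)) hc hs, ← integral_neg]
  congr 1 with x
  by_cases hx : x ∈ Ω
  · rw [← hg x hx]; ring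
  · rw [image_eq_zero_of_notMem_tsupport (notMem_subset hs hx)]; ring

lemma IsBallKernel.lapl (hk : IsBallKernel k) (hC2 : ContDiff ℝ 2 k) : IsBallKernel (lapl k) :=
  ⟨continuous_lapl hC2, (tsupport_lapl_subset k).trans hk.tsupport_subset⟩

lemma IsBallKernel.dilation_eq_zero (hk : IsBallKernel k) (hr : 0 < r)
    {z : EuclideanSpace ℝ (Fin N)} (hz : z ∉ closedBall x r) : k (r⁻¹ • (z - x)) = 0 := by
  refine hk.eq_zero ?_
  rw [mem_closedBall, dist_eq_norm, not_le] at hz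
  rwa [norm_smul, norm_inv, norm_of_nonneg hr.le, inv_mul_eq_div, one_lt_div hr]

lemma IsBallKernel.tsupport_dilation_subset (hk : IsBallKernel k) (hr : 0 < r)
    (x : EuclideanSpace ℝ (Fin N)) :
    tsupport (fun z => k (r⁻¹ • (z - x))) ⊆ closedBall x r :=
  closure_minimal (fun _ hz => by_contra fun hz' => hz (hk.dilation_eq_zero hr hz'))
    isClosed_closedBall

lemma IsBallKernel.hasCompactSupport_dilation (hk : IsBallKernel k) (hr : 0 < r)
    (x : EuclideanSpace ℝ (Fin N)) : HasCompactSupport fun z => k (r⁻¹ • (z - x)) :=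
  (isCompact_closedBall x r).of_isClosed_subset (isClosed_tsupport _)
    (hk.tsupport_dilation_subset hr x)

lemma hasDerivAt_dilated_mollifier (x z : EuclideanSpace ℝ (Fin N)) (hr : 0 < r) :
    HasDerivAt (fun r : ℝ => (r ^ N)⁻¹ * mollifier (r⁻¹ • (z - x)))
      ((r ^ (N + 1))⁻¹ * lapl potentialKernel (r⁻¹ • (z - x))) r := by
  have h_arg : HasDerivAt (fun r : ℝ => r⁻¹ • (z - x)) (-(r ^ 2)⁻¹ • (z - x)) r :=
    (hasDerivAt_inv hr.ne').smul_const _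
  have h_moll := (mollifier_contDiff.differentiable (by simp)
    (r⁻¹ • (z - x))).hasFDerivAt.comp_hasDerivAt r h_arg
  have h_pow : HasDerivAt (fun r : ℝ => (r ^ N)⁻¹) (-(N * r ^ (N - 1)) / (r ^ N) ^ 2) r :=
    (hasDerivAt_pow N r).inv (by positivity)
  refine (h_pow.mul h_moll).congr_deriv ?_
  rw [lapl_potentialKernel]
  simp only [Function.comp, map_smul, smul_eq_mul]
  rcases N with _ | n
  · simp only [Nat.cast_zero]
    field_simp
    ring
  · simp only [Nat.add_sub_cancel]
    field_simp
    ring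

lemma norm_dilated_lapl_potentialKernel_mul_le {C D : ℝ} (hC : ∀ z, |w z| ≤ C)
    (hD : ∀ y : EuclideanSpace ℝ (Fin N), ‖lapl potentialKernel y‖ ≤ D) (hr : 0 < r)
    (hs : s ∈ Ioo (r / 2) (2 * r)) (z : EuclideanSpace ℝ (Fin N)) :
    ‖w z * ((s ^ (N + 1))⁻¹ * lapl potentialKernel (s⁻¹ • (z - x)))‖
      ≤ (closedBall x (2 * r)).indicator (fun _ => C * (((r / 2) ^ (N + 1))⁻¹ * D)) z := by
  have hs0 : 0 < s := (half_pos hr).trans hs.1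
  by_cases hz : z ∈ closedBall x (2 * r)
  · rw [indicator_of_mem hz, norm_mul, norm_mul, norm_inv, norm_pow, norm_of_nonneg hs0.le]
    have hC0 : 0 ≤ C := (abs_nonneg _).trans (hC x)
    gcongr
    exacts [hC z, hs.1.le, hD _]
  · rw [indicator_of_notMem hz, (isBallKernel_potentialKernel.lapl (potentialKernel_contDiff.of_le
      (by norm_cast))).dilation_eq_zero hs0
        (notMem_subset (closedBall_subset_closedBall hs.2.le) hz)]
    simp only [mul_zero, norm_zero, le_refl]

lemma hasDerivAt_mollify (hw : BoundedMeasurable w) (x : EuclideanSpace ℝ (Fin N)) (hr : 0 < r) :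
    HasDerivAt (fun s => mollify s w x)
      (∫ z, w z * ((r ^ (N + 1))⁻¹ * lapl potentialKernel (r⁻¹ • (z - x)))) r := by
  obtain ⟨hwm, C, hC⟩ := hw
  have hκ : ContDiff ℝ 2 (potentialKernel : EuclideanSpace ℝ (Fin N) → ℝ) :=
    potentialKernel_contDiff.of_le (by norm_cast)
  have h_lapl := isBallKernel_potentialKernel.lapl hκ
  obtain ⟨D, hD⟩ := h_lapl.hasCompactSupport.exists_bound_of_continuous h_lapl.continuous
  have h_dilation : (fun s => mollify s w x) =ᶠ[𝓝 r]
      fun s => ∫ z, w z * ((s ^ N)⁻¹ * mollifier (s⁻¹ • (z - x))) := by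
    filter_upwards [Ioi_mem_nhds hr] with s hs
    rw [mollify, kernelAvg_eq_integral_dilation _ hs, finrank_euclideanSpace_fin,
      ← integral_smul]
    simp only [smul_eq_mul, mul_left_comm]
  have h_meas {k : EuclideanSpace ℝ (Fin N) → ℝ} (hk : Continuous k) (a s : ℝ) :
      AEStronglyMeasurable (fun z => w z * (a * k (s⁻¹ • (z - x)))) :=
    (hwm.mul (((hk.comp (by fun_prop)).const_mul a).measurable)).aestronglyMeasurable
  have h_int : Integrable fun z => w z * ((r ^ N)⁻¹ * mollifier (r⁻¹ • (z - x))) :=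
    (((mollifier_contDiff.continuous.comp (by fun_prop)).integrable_of_hasCompactSupport
      (isBallKernel_mollifier.hasCompactSupport_dilation hr x)).const_mul _).bdd_mul
        hwm.aestronglyMeasurable (ae_of_all _ hC)
  have h_bound : Integrable ((closedBall x (2 * r)).indicator
      fun _ => C * (((r / 2) ^ (N + 1))⁻¹ * D)) :=
    (integrable_indicator_iff measurableSet_closedBall).2
      (integrableOn_const measure_closedBall_lt_top.ne enorm_ne_top)
  have h_key := hasDerivAt_integral_of_dominated_loc_of_deriv_le (s := Ioo (r / 2) (2 * r))
    (F := fun s z => w z * ((s ^ N)⁻¹ * mollifier (s⁻¹ • (z - x))))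
    (F' := fun s z => w z * ((s ^ (N + 1))⁻¹ * lapl potentialKernel (s⁻¹ • (z - x))))
    (Ioo_mem_nhds (by linarith) (by linarith))
    (Eventually.of_forall fun s => h_meas mollifier_contDiff.continuous _ s) h_int
    (h_meas h_lapl.continuous _ r)
    (ae_of_all _ fun z s hs => norm_dilated_lapl_potentialKernel_mul_le hC hD hr hs z) h_bound
    (ae_of_all _ fun z s hs => (hasDerivAt_dilated_mollifier x z
      ((half_pos hr).trans hs.1)).const_mul _)
  exact h_key.2.congr_of_eventuallyEq h_dilation

lemma IsWeakSolution.integral_mul_lapl_dilation (h : IsWeakSolution Ω w g) (hr : 0 < r)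
    (hb : closedBall x r ⊆ Ω) :
    ∫ z, w z * ((r ^ (N + 1))⁻¹ * lapl potentialKernel (r⁻¹ • (z - x)))
      = -(r * kernelAvg potentialKernel r g x) := by
  have h_test := h (fun z => potentialKernel (r⁻¹ • (z - x)))
    (potentialKernel_contDiff.comp (by fun_prop))
    (isBallKernel_potentialKernel.hasCompactSupport_dilation hr x)
    ((isBallKernel_potentialKernel.tsupport_dilation_subset hr x).trans hb)
  simp only [lapl_comp_smul_sub (potentialKernel_contDiff.of_le (by norm_cast)),
    mul_left_comm _ (r⁻¹ ^ 2), integral_const_mul] at h_test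
  simp only [mul_left_comm _ (r ^ (N + 1))⁻¹, integral_const_mul]
  rw [kernelAvg_eq_integral_dilation _ hr, finrank_euclideanSpace_fin]
  simp only [smul_eq_mul]
  generalize ∫ z, g z * potentialKernel (r⁻¹ • (z - x)) = G at h_test ⊢
  generalize ∫ z, w z * lapl potentialKernel (r⁻¹ • (z - x)) = W at h_test ⊢
  rw [← neg_eq_iff_eq_neg.2 h_test]
  field_simp
  ring

lemma IsWeakSolution.hasDerivAt_mollify (h : IsWeakSolution Ω w g) (hw : BoundedMeasurable w)
    (hr : 0 < r) (hb : closedBall x r ⊆ Ω) :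
    HasDerivAt (fun s => mollify s w x) (-(r * kernelAvg potentialKernel r g x)) r :=
  (_root_.hasDerivAt_mollify hw x hr).congr_deriv (h.integral_mul_lapl_dilation hr hb)

lemma IsWeakSolution.mollify_add_localPotential_eq (h : IsWeakSolution Ω w g)
    (hw : BoundedMeasurable w) (hg : BoundedMeasurable g) (hs : 0 < s) (hst : s ≤ t)
    (hb : closedBall x t ⊆ Ω) :
    mollify s w x + localPotential s g x = mollify t w x + localPotential t g x := by
  have h_ftc := intervalIntegral.integral_eq_sub_of_hasDerivAt (fun r hr => by
    rw [uIcc_of_le hst] at hr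
    exact h.hasDerivAt_mollify hw (hs.trans_le hr.1)
      ((closedBall_subset_closedBall hr.2).trans hb))
    (potentialKernel_intervalIntegrable hg x s t).neg
  have h_adj := intervalIntegral.integral_add_adjacent_intervals
    (potentialKernel_intervalIntegrable hg x 0 s) (potentialKernel_intervalIntegrable hg x s t)
  simp only [Pi.neg_apply, intervalIntegral.integral_neg] at h_ftc
  unfold localPotential
  linarith

lemma abs_mollify_sub_le (hw : BoundedMeasurable w) (ht : 0 ≤ t) {a ε : ℝ}
    (h : ∀ z ∈ closedBall x t, |w z - a| ≤ ε) : |mollify t w x - a| ≤ ε := by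
  have h_upper := kernelAvg_mono isBallKernel_mollifier mollifier_nonneg hw (.const (a + ε)) ht
    fun z hz => by linarith [(abs_le.1 (h z hz)).2]
  have h_lower := kernelAvg_mono isBallKernel_mollifier mollifier_nonneg (.const (a - ε)) hw ht
    fun z hz => by linarith [(abs_le.1 (h z hz)).1]
  rw [show kernelAvg mollifier t (fun _ => a + ε) x = _ from mollify_const _ t x] at h_upper
  rw [show kernelAvg mollifier t (fun _ => a - ε) x = _ from mollify_const _ t x] at h_lower
  exact abs_le.2 ⟨by linarith, by linarith⟩

lemma eventually_closedBall_abs_sub_le (hw : ContinuousAt w x) {ε : ℝ} (hε : 0 < ε) :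
    ∀ᶠ t in 𝓝[>] (0 : ℝ), 0 < t ∧ ∀ z ∈ closedBall x t, |w z - w x| ≤ ε := by
  obtain ⟨δ, hδ, h⟩ := Metric.continuousAt_iff.1 hw ε hε
  filter_upwards [Ioo_mem_nhdsGT hδ] with t ht
  exact ⟨ht.1, fun z hz => (h (lt_of_le_of_lt hz ht.2)).le⟩

lemma tendsto_mollify (hw : BoundedMeasurable w) (hc : ContinuousAt w x) :
    Tendsto (fun t => mollify t w x) (𝓝[>] 0) (𝓝 (w x)) := by
  refine tendsto_order.2 ⟨fun a ha => ?_, fun a ha => ?_⟩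
  · filter_upwards [eventually_closedBall_abs_sub_le hc (half_pos (sub_pos.2 ha))] with t ht
    linarith [(abs_le.1 (abs_mollify_sub_le hw ht.1.le ht.2)).1]
  · filter_upwards [eventually_closedBall_abs_sub_le hc (half_pos (sub_pos.2 ha))] with t ht
    linarith [(abs_le.1 (abs_mollify_sub_le hw ht.1.le ht.2)).2]

lemma tendsto_localPotential_zero (hg : BoundedMeasurable g) (x : EuclideanSpace ℝ (Fin N)) :
    Tendsto (fun t => localPotential t g x) (𝓝[>] 0) (𝓝 0) := by
  obtain ⟨hgm, C, hC⟩ := hg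
  refine squeeze_zero_norm'
    (a := fun t => potentialConst (EuclideanSpace ℝ (Fin N)) * C * t ^ 2) ?_ ?_
  · filter_upwards [self_mem_nhdsWithin] with t ht
    exact abs_localPotential_le hgm hC (mem_Ioi.1 ht).le x
  · have h_cont : Continuous fun t : ℝ => potentialConst (EuclideanSpace ℝ (Fin N)) * C * t ^ 2 :=
      by fun_prop
    simpa using (h_cont.tendsto 0).mono_left nhdsWithin_le_nhds

lemma abs_localPotential_sub_le (hg : BoundedMeasurable g) (ht : 0 ≤ t) {a ε : ℝ}
    (h : ∀ z ∈ closedBall x t, |g z - a| ≤ ε) :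
    |localPotential t g x - potentialConst (EuclideanSpace ℝ (Fin N)) * a * t ^ 2|
      ≤ potentialConst (EuclideanSpace ℝ (Fin N)) * ε * t ^ 2 := by
  have h_upper := localPotential_mono (x := x) hg (.const (a + ε)) ht
    fun z hz => by linarith [(abs_le.1 (h z hz)).2]
  have h_lower := localPotential_mono (x := x) (.const (a - ε)) hg ht
    fun z hz => by linarith [(abs_le.1 (h z hz)).1]
  rw [localPotential_const] at h_upper h_lower
  exact abs_le.2 ⟨by linarith, by linarith⟩

lemma tendsto_localPotential_div_sq (hg : BoundedMeasurable g) (hc : ContinuousAt g x) :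
    Tendsto (fun t => localPotential t g x / t ^ 2) (𝓝[>] 0)
      (𝓝 (potentialConst (EuclideanSpace ℝ (Fin N)) * g x)) := by
  have hb := potentialConst_pos (E := EuclideanSpace ℝ (Fin N))
  refine Metric.tendsto_nhds.2 fun ε hε => ?_
  filter_upwards [eventually_closedBall_abs_sub_le hc
    (half_pos (div_pos hε hb))] with t ⟨ht, h_ball⟩
  have h_sub := abs_localPotential_sub_le hg ht.le h_ball
  rw [Real.dist_eq, div_sub' (by positivity), abs_div, abs_of_pos (pow_pos ht 2),
    div_lt_iff₀ (by positivity), mul_comm (t ^ 2)]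
  have h_half : potentialConst (EuclideanSpace ℝ (Fin N)) *
      (ε / potentialConst (EuclideanSpace ℝ (Fin N)) / 2) = ε / 2 := by
    field_simp
  rw [h_half] at h_sub
  nlinarith [pow_pos ht 2]

lemma IsWeakSolution.isMeanValueSolution (h : IsWeakSolution Ω w g) (hΩ : IsOpen Ω)
    (hw : BoundedMeasurable w) (hg : BoundedMeasurable g) (hc : ContinuousOn w Ω) :
    IsMeanValueSolution Ω w g := by
  intro x hx t ht hb
  have h_lim := (tendsto_mollify hw (hc.continuousAt (hΩ.mem_nhds hx))).add
    (tendsto_localPotential_zero hg x)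
  rw [add_zero] at h_lim
  refine tendsto_nhds_unique h_lim (tendsto_const_nhds.congr' ?_)
  filter_upwards [Ioc_mem_nhdsGT ht] with s hs
  exact (h.mollify_add_localPotential_eq hw hg hs.1 hs.2 hb).symm

end WeakSolutions

section RegularityOfAverages

variable {E F : Type*} [NormedAddCommGroup E] [InnerProductSpace ℝ E] [FiniteDimensional ℝ E]
  [MeasurableSpace E] [BorelSpace E] [NormedAddCommGroup F] [NormedSpace ℝ F]
  {k : E → F} {w g : E → ℝ} {t : ℝ}

lemma kernelAvg_eq_convolution (k : E → F) (ht : 0 < t) (w : E → ℝ) :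
    kernelAvg k t w = fun x => (t ^ Module.finrank ℝ E)⁻¹ •
      convolution w (fun y => k (-t⁻¹ • y)) (ContinuousLinearMap.lsmul ℝ ℝ) volume x := by
  ext x
  rw [kernelAvg_eq_integral_dilation k ht, convolution]
  simp only [ContinuousLinearMap.lsmul_apply, neg_smul, ← smul_neg, neg_sub]

lemma continuous_kernelAvg (hk : IsBallKernel k) (hw : BoundedMeasurable w) (ht : 0 < t) :
    Continuous (kernelAvg k t w) := by
  rw [kernelAvg_eq_convolution k ht]
  have h_supp : HasCompactSupport fun y => k (-t⁻¹ • y) :=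
    hk.hasCompactSupport.comp_smul (neg_ne_zero.2 (inv_ne_zero ht.ne'))
  exact (h_supp.continuous_convolution_right _ hw.locallyIntegrable
    (hk.continuous.comp (continuous_const_smul _))).const_smul _

lemma hasFDerivAt_kernelAvg {k : E → ℝ} (hk : IsBallKernel k) (hC1 : ContDiff ℝ 1 k)
    (hw : BoundedMeasurable w) (ht : 0 < t) (x : E) :
    HasFDerivAt (kernelAvg k t w) (-t⁻¹ • kernelAvg (fderiv ℝ k) t w x) x := by
  have h_fderiv (y : E) : fderiv ℝ (fun y => k (-t⁻¹ • y)) y = -t⁻¹ • fderiv ℝ k (-t⁻¹ • y) :=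
    fderiv_comp_smul _
  have h_supp : HasCompactSupport fun y => k (-t⁻¹ • y) :=
    hk.hasCompactSupport.comp_smul (neg_ne_zero.2 (inv_ne_zero ht.ne'))
  have h_conv := (h_supp.hasFDerivAt_convolution_right (μ := volume)
    (ContinuousLinearMap.lsmul ℝ ℝ) hw.locallyIntegrable
    (hC1.comp (contDiff_const_smul _)) x).const_smul (t ^ Module.finrank ℝ E)⁻¹
  rw [kernelAvg_eq_convolution k ht, kernelAvg_eq_convolution (fderiv ℝ k) ht]
  refine h_conv.congr_fderiv ?_
  have h_precomp (z : E) (L : E →L[ℝ] ℝ) :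
      (ContinuousLinearMap.lsmul ℝ ℝ).precompR E (w z) (-t⁻¹ • L)
        = -t⁻¹ • ContinuousLinearMap.lsmul ℝ ℝ (w z) L := by
    ext v
    exact mul_left_comm (w z) (-t⁻¹) _
  simp only [convolution, h_fderiv, h_precomp, integral_smul]
  rw [smul_comm]

lemma fderiv_kernelAvg_apply {k : E → ℝ} (hk : IsBallKernel k) (hw : ContDiff ℝ 1 w)
    (hc : HasCompactSupport w) (t : ℝ) (x e : E) :
    fderiv ℝ (kernelAvg k t w) x e = kernelAvg k t (fun z => fderiv ℝ w z e) x := by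
  obtain ⟨D, hD⟩ := (hc.fderiv ℝ).exists_bound_of_continuous (hw.continuous_fderiv one_ne_zero)
  have hw_bdd := BoundedMeasurable.of_hasCompactSupport hw.continuous hc
  have h_int : Integrable fun y => k y • fderiv ℝ w (x + t • y) :=
    hk.integrable.smul_bdd D ((hw.continuous_fderiv one_ne_zero).comp
      (by fun_prop)).aestronglyMeasurable (ae_of_all _ fun y => hD _)
  have h_deriv : HasFDerivAt (kernelAvg k t w) (∫ y, k y • fderiv ℝ w (x + t • y)) x := by
    refine hasFDerivAt_integral_of_dominated_of_fderiv_le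
      (F' := fun x y => k y • fderiv ℝ w (x + t • y)) (bound := fun y => ‖k y‖ * D) univ_mem
      (Eventually.of_forall fun x => (kernelAvg_integrable hk hw_bdd t x).aestronglyMeasurable)
      (kernelAvg_integrable hk hw_bdd t x) h_int.aestronglyMeasurable
      (ae_of_all _ fun y z _ => ?_) (hk.integrable.norm.mul_const D) (ae_of_all _ fun y z _ => ?_)
    · rw [norm_smul]
      exact mul_le_mul_of_nonneg_left (hD _) (norm_nonneg _)
    · have h_shift : HasFDerivAt (fun z => w (z + t • y)) (fderiv ℝ w (z + t • y)) z :=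
        (hasFDerivAt_comp_add_right _).2 (hw.differentiable one_ne_zero _).hasFDerivAt
      simp only [smul_eq_mul, mul_comm _ (k y)]
      exact h_shift.const_mul (k y)
  rw [h_deriv.fderiv, ContinuousLinearMap.integral_apply h_int]
  simp only [kernelAvg, smul_apply, smul_eq_mul, mul_comm]

lemma isBallKernel_fderiv_potentialKernel :
    IsBallKernel (fderiv ℝ (potentialKernel : E → ℝ)) :=
  isBallKernel_potentialKernel.fderiv (potentialKernel_contDiff.of_le (by norm_cast))

lemma hasFDerivAt_mul_kernelAvg_potentialKernel (hg : BoundedMeasurable g) (ht : 0 < t) (x : E) :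
    HasFDerivAt (fun x => t * kernelAvg potentialKernel t g x)
      (-kernelAvg (fderiv ℝ potentialKernel) t g x) x := by
  refine ((hasFDerivAt_kernelAvg isBallKernel_potentialKernel
    (potentialKernel_contDiff.of_le (by norm_cast)) hg ht x).const_mul t).congr_fderiv ?_
  rw [smul_smul, mul_neg, mul_inv_cancel₀ ht.ne', neg_one_smul]

lemma intervalIntegrable_kernelAvg_fderiv (hg : BoundedMeasurable g) (x : E) (t : ℝ) :
    IntervalIntegrable (fun s => kernelAvg (fderiv ℝ potentialKernel) s g x) volume 0 t := by
  obtain ⟨hgm, C, hC⟩ := hg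
  have h_meas : StronglyMeasurable fun s : ℝ => kernelAvg (fderiv ℝ potentialKernel) s g x :=
    (kernelAvg_stronglyMeasurable isBallKernel_fderiv_potentialKernel hgm).comp_measurable
      (measurable_id.prodMk measurable_const)
  exact intervalIntegrable_iff.2 <| Measure.integrableOn_of_bounded (by simp)
    h_meas.aestronglyMeasurable
    (ae_of_all _ fun s => norm_kernelAvg_le isBallKernel_fderiv_potentialKernel hC s x)

lemma hasFDerivAt_localPotential (hg : BoundedMeasurable g) (ht : 0 < t) (x : E) :
    HasFDerivAt (localPotential t g)
      (∫ s in (0 : ℝ)..t, -kernelAvg (fderiv ℝ potentialKernel) s g x) x := by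
  have h_int := (intervalIntegrable_kernelAvg_fderiv hg x t).neg
  obtain ⟨hgm, C, hC⟩ := hg
  have hg : BoundedMeasurable g := ⟨hgm, C, hC⟩
  refine intervalIntegral.hasFDerivAt_integral_of_dominated_of_fderiv_le (𝕜 := ℝ)
    (F' := fun x s => -kernelAvg (fderiv ℝ potentialKernel) s g x)
    (bound := fun _ => C * ∫ y : E, ‖fderiv ℝ potentialKernel y‖) univ_mem
    (Eventually.of_forall fun x =>
      (potentialKernel_intervalIntegrable hg x 0 t).aestronglyMeasurable_restrict_uIoc)
    (potentialKernel_intervalIntegrable hg x 0 t) h_int.aestronglyMeasurable_restrict_uIoc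
    (ae_of_all _ fun s _ z _ => ?_) intervalIntegrable_const (ae_of_all _ fun s hs z _ => ?_)
  · rw [norm_neg]
    exact norm_kernelAvg_le isBallKernel_fderiv_potentialKernel hC s z
  · rw [uIoc_of_le ht.le] at hs
    exact hasFDerivAt_mul_kernelAvg_potentialKernel hg hs.1 z

lemma contDiff_one_localPotential (hg : BoundedMeasurable g) (ht : 0 < t) :
    ContDiff ℝ 1 (localPotential t g) := by
  refine contDiff_one_iff_hasFDerivAt.2 ⟨_, ?_, hasFDerivAt_localPotential hg ht⟩
  obtain ⟨hgm, C, hC⟩ := hg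
  have hg : BoundedMeasurable g := ⟨hgm, C, hC⟩
  refine intervalIntegral.continuous_of_dominated_interval
    (bound := fun _ => C * ∫ y : E, ‖fderiv ℝ potentialKernel y‖)
    (fun x => (intervalIntegrable_kernelAvg_fderiv hg x t).neg.aestronglyMeasurable_restrict_uIoc)
    (fun x => ae_of_all _ fun s _ => ?_) intervalIntegrable_const (ae_of_all _ fun s hs => ?_)
  · rw [norm_neg]
    exact norm_kernelAvg_le isBallKernel_fderiv_potentialKernel hC s x
  · rw [uIoc_of_le ht.le] at hs
    exact (continuous_kernelAvg isBallKernel_fderiv_potentialKernel hg hs.1).neg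

lemma fderiv_localPotential_apply (hg : ContDiff ℝ 1 g) (hc : HasCompactSupport g) (ht : 0 < t)
    (x e : E) :
    fderiv ℝ (localPotential t g) x e = localPotential t (fun z => fderiv ℝ g z e) x := by
  have hg_bdd := BoundedMeasurable.of_hasCompactSupport hg.continuous hc
  have h_int : IntervalIntegrable (fun s => -kernelAvg (fderiv ℝ potentialKernel) s g x)
      volume 0 t := (intervalIntegrable_kernelAvg_fderiv hg_bdd x t).neg
  rw [(hasFDerivAt_localPotential hg_bdd ht x).fderiv,
    ContinuousLinearMap.intervalIntegral_apply h_int]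
  refine intervalIntegral.integral_congr_ae (ae_of_all _ fun s hs => ?_)
  rw [uIoc_of_le ht.le] at hs
  have h_diff := (hasFDerivAt_kernelAvg isBallKernel_potentialKernel
    (potentialKernel_contDiff.of_le (by norm_cast)) hg_bdd hs.1 x).differentiableAt
  rw [← (hasFDerivAt_mul_kernelAvg_potentialKernel hg_bdd hs.1 x).fderiv,
    fderiv_const_mul h_diff, smul_apply, smul_eq_mul,
    fderiv_kernelAvg_apply isBallKernel_potentialKernel hg hc]

lemma contDiff_two_localPotential (hg : ContDiff ℝ 1 g) (hc : HasCompactSupport g) (ht : 0 < t) :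
    ContDiff ℝ 2 (localPotential t g) := by
  have h_one := contDiff_one_localPotential (.of_hasCompactSupport hg.continuous hc) ht
  rw [show (2 : WithTop ℕ∞) = 1 + 1 by norm_num, contDiff_succ_iff_fderiv_apply]
  refine ⟨h_one.differentiable one_ne_zero, by simp, fun e => ?_⟩
  simp only [fderiv_localPotential_apply hg hc ht]
  exact contDiff_one_localPotential (.of_hasCompactSupport
    (contDiff_fderiv_apply hg (m := 0) (by norm_num) e).continuous (hc.fderiv_apply ℝ e)) ht

end RegularityOfAverages

section MeanValueSolutions

lemma exists_contDiff_hasCompactSupport_eqOn {E : Type*} [NormedAddCommGroup E] [NormedSpace ℝ E]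
    [FiniteDimensional ℝ E] {n : ℕ∞} {Ω : Set E} {f : E → ℝ} {x : E} {r : ℝ} (hΩ : IsOpen Ω)
    (hf : ContDiffOn ℝ n f Ω) (hr : 0 < r) (hb : closedBall x (2 * r) ⊆ Ω) :
    ∃ h : E → ℝ, ContDiff ℝ n h ∧ HasCompactSupport h ∧ EqOn h f (closedBall x r) := by
  let c : ContDiffBump x := ⟨r, 2 * r, hr, by linarith⟩
  have hcΩ : tsupport c ⊆ Ω := by rwa [c.tsupport_eq]
  refine ⟨fun z => c z * f z, contDiff_iff_contDiffAt.2 fun z => ?_, c.hasCompactSupport.mul_right,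
    fun z hz => by simp only [c.one_of_mem_closedBall hz, one_mul]⟩
  by_cases hz : z ∈ tsupport c
  · exact c.contDiff.contDiffAt.mul (hf.contDiffAt (hΩ.mem_nhds (hcΩ hz)))
  · refine contDiffAt_const (c := (0 : ℝ)) |>.congr_of_eventuallyEq ?_
    filter_upwards [(isClosed_tsupport c).isOpen_compl.mem_nhds hz] with y hy
    rw [image_eq_zero_of_notMem_tsupport hy, zero_mul]

lemma exists_closedBall_two_mul_subset {X : Type*} [PseudoMetricSpace X] {Ω : Set X} {x : X}
    (hΩ : IsOpen Ω) (hx : x ∈ Ω) : ∃ r > 0, closedBall x (2 * r) ⊆ Ω := by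
  obtain ⟨r, hr, hb⟩ := nhds_basis_closedBall.mem_iff.1 (hΩ.mem_nhds hx)
  exact ⟨r / 2, half_pos hr, by rwa [mul_div_cancel₀ r two_ne_zero]⟩

lemma closedBall_subset_closedBall_two_mul {X : Type*} [PseudoMetricSpace X] {x z : X} {r : ℝ}
    (hz : z ∈ ball x r) : closedBall z r ⊆ closedBall x (2 * r) :=
  closedBall_subset_closedBall' (by linarith [mem_ball.1 hz])

variable {N : ℕ} {w v g h : EuclideanSpace ℝ (Fin N) → ℝ} {Ω : Set (EuclideanSpace ℝ (Fin N))}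
  {x : EuclideanSpace ℝ (Fin N)} {r t : ℝ}

lemma contDiff_mollify (hw : BoundedMeasurable w) (ht : 0 < t) : ContDiff ℝ ∞ (mollify t w) := by
  have h_supp : HasCompactSupport fun y : EuclideanSpace ℝ (Fin N) => mollifier (-t⁻¹ • y) :=
    isBallKernel_mollifier.hasCompactSupport.comp_smul (neg_ne_zero.2 (inv_ne_zero ht.ne'))
  rw [show mollify t w = _ from kernelAvg_eq_convolution mollifier ht w]
  exact (h_supp.contDiff_convolution_right (μ := volume) _ hw.locallyIntegrable
    (mollifier_contDiff.comp (contDiff_const_smul _))).const_smul _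

lemma eqOn_ball_of_mean_value
    (hwv : ∀ x ∈ Ω, ∀ t > 0, closedBall x t ⊆ Ω → w x = mollify t v x + localPotential t g x)
    (hr : 0 < r) (hb : closedBall x (2 * r) ⊆ Ω) :
    EqOn w (fun z => mollify r v z + localPotential r g z) (ball x r) := fun z hz =>
  have hzb := (closedBall_subset_closedBall_two_mul hz).trans hb
  hwv z (hzb (mem_closedBall_self hr.le)) r hr hzb

lemma contDiffOn_one_of_mean_value
    (hwv : ∀ x ∈ Ω, ∀ t > 0, closedBall x t ⊆ Ω → w x = mollify t v x + localPotential t g x)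
    (hΩ : IsOpen Ω) (hv : BoundedMeasurable v) (hg : BoundedMeasurable g) :
    ContDiffOn ℝ 1 w Ω := fun x hx => by
  obtain ⟨r, hr, hb⟩ := exists_closedBall_two_mul_subset hΩ hx
  have h_smooth := ((contDiff_mollify hv hr).of_le (by norm_cast)).add
    (contDiff_one_localPotential hg hr)
  exact (h_smooth.contDiffAt.congr_of_eventuallyEq
    ((eqOn_ball_of_mean_value hwv hr hb).eventuallyEq_of_mem
      (ball_mem_nhds x hr))).contDiffWithinAt

namespace IsMeanValueSolution

lemma contDiffOn_two (hwg : IsMeanValueSolution Ω w g) (hΩ : IsOpen Ω)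
    (hw : BoundedMeasurable w) (hg : ContDiffOn ℝ 1 g Ω) : ContDiffOn ℝ 2 w Ω := fun x hx => by
  obtain ⟨r, hr, hb⟩ := exists_closedBall_two_mul_subset hΩ hx
  obtain ⟨g', hg', hc, h_eq⟩ := exists_contDiff_hasCompactSupport_eqOn (n := 1) hΩ hg hr hb
  have hs : 0 < r / 2 := half_pos hr
  have h_smooth := ((contDiff_mollify hw hs).of_le (m := 2) (by norm_cast)).add
    (contDiff_two_localPotential hg' hc hs)
  refine (h_smooth.contDiffAt.congr_of_eventuallyEq ?_).contDiffWithinAt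
  filter_upwards [ball_mem_nhds x hs] with z hz
  have h_ball := closedBall_subset_closedBall_two_mul hz
  rw [mul_div_cancel₀ r two_ne_zero] at h_ball
  rw [eqOn_ball_of_mean_value hwg hs ((closedBall_subset_closedBall (by linarith)).trans hb) hz]
  simp only [localPotential_congr hs.le fun _ hy => h_eq (h_ball hy)]

lemma neg_lapl_eq (hwg : IsMeanValueSolution Ω w g) (hΩ : IsOpen Ω)
    (hg : BoundedMeasurable g) (hgc : ContinuousOn g Ω) (hw : ContDiffOn ℝ 2 w Ω) (hx : x ∈ Ω) :
    -lapl w x = g x := by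
  obtain ⟨r, hr, hb⟩ := exists_closedBall_two_mul_subset hΩ hx
  obtain ⟨v, hv, hc, h_eq⟩ := exists_contDiff_hasCompactSupport_eqOn (n := 2) hΩ hw hr hb
  have h_lapl : BoundedMeasurable fun z => -lapl v z :=
    .of_hasCompactSupport (continuous_lapl hv).neg ((hasCompactSupport_lapl hc).comp_left neg_zero)
  have h_mv : IsMeanValueSolution univ v fun z => -lapl v z :=
    (isWeakSolution_of_contDiffOn isOpen_univ hv.contDiffOn fun _ _ => rfl).isMeanValueSolution
      isOpen_univ (.of_hasCompactSupport hv.continuous hc) h_lapl hv.continuous.continuousOn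
  have h_pot : ∀ᶠ t in 𝓝[>] (0 : ℝ),
      localPotential t g x / t ^ 2 = localPotential t (fun z => -lapl v z) x / t ^ 2 := by
    filter_upwards [Ioc_mem_nhdsGT hr] with t ht
    have h_sub := closedBall_subset_closedBall (x := x) ht.2
    have h_v := h_mv x (mem_univ x) t ht.1 (subset_univ _)
    have h_w := hwg x hx t ht.1
      ((closedBall_subset_closedBall (by linarith [ht.2])).trans hb)
    rw [mollify, kernelAvg_congr isBallKernel_mollifier ht.1.le fun z hz => h_eq (h_sub hz),
      h_eq (h_sub (mem_closedBall_self ht.1.le))] at h_v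
    rw [add_left_cancel (h_w.symm.trans h_v)]
  have h_unique := tendsto_nhds_unique
    ((tendsto_localPotential_div_sq hg (hgc.continuousAt (hΩ.mem_nhds hx))).congr' h_pot)
    (tendsto_localPotential_div_sq h_lapl (continuous_lapl hv).neg.continuousAt)
  rw [mul_left_cancel₀ potentialConst_pos.ne' h_unique, neg_inj]
  exact lapl_eq_of_eqOn isOpen_ball (h_eq.symm.mono ball_subset_closedBall) (mem_ball_self hr)

lemma add (hw : IsMeanValueSolution Ω w g) (hv : IsMeanValueSolution Ω v h)
    (hwb : BoundedMeasurable w) (hvb : BoundedMeasurable v) (hgb : BoundedMeasurable g)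
    (hhb : BoundedMeasurable h) :
    IsMeanValueSolution Ω (fun x => w x + v x) fun x => g x + h x := fun x hx t ht hb => by
  simp only [mollify, kernelAvg_add isBallKernel_mollifier hwb hvb,
    localPotential_add hgb hhb, hw x hx t ht hb, hv x hx t ht hb]
  ring

lemma const_mul (hw : IsMeanValueSolution Ω w g) (a : ℝ) :
    IsMeanValueSolution Ω (fun x => a * w x) fun x => a * g x := fun x hx t ht hb => by
  simp only [mollify, kernelAvg_const_mul, localPotential_const_mul, smul_eq_mul]
  rw [← mul_add, ← hw x hx t ht hb]

end IsMeanValueSolution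

lemma isMeanValueSolution_of_contDiffOn (hΩ : IsOpen Ω) (hwb : BoundedMeasurable w)
    (hgb : BoundedMeasurable g) (hw : ContDiffOn ℝ 2 w Ω) (hg : ∀ x ∈ Ω, -lapl w x = g x) :
    IsMeanValueSolution Ω w g :=
  (isWeakSolution_of_contDiffOn hΩ hw hg).isMeanValueSolution hΩ hwb hgb hw.continuousOn

section DominatedConvergence

variable {E : Type*} [NormedAddCommGroup E] [InnerProductSpace ℝ E] [FiniteDimensional ℝ E]
  [MeasurableSpace E] [BorelSpace E] {ι : Type*} {l : Filter ι} [l.IsCountablyGenerated]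
  {W : ι → E → ℝ} {w k : E → ℝ} {C t : ℝ} {x : E}

lemma tendsto_kernelAvg (hk : IsBallKernel k) (hW : ∀ i, Measurable (W i))
    (hC : ∀ i x, |W i x| ≤ C) (ht : 0 ≤ t)
    (h : ∀ z ∈ closedBall x t, Tendsto (fun i => W i z) l (𝓝 (w z))) :
    Tendsto (fun i => kernelAvg k t (W i) x) l (𝓝 (kernelAvg k t w x)) := by
  refine tendsto_integral_filter_of_dominated_convergence (fun y => C * ‖k y‖)
    (Eventually.of_forall fun i =>
      (kernelAvg_integrable hk ⟨hW i, C, hC i⟩ t x).aestronglyMeasurable)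
    (Eventually.of_forall fun i => ae_of_all _ fun y => ?_) (hk.integrable.norm.const_mul C)
    (ae_of_all _ fun y => ?_)
  · rw [norm_smul]
    exact mul_le_mul_of_nonneg_right (hC i _) (norm_nonneg _)
  · rcases lt_or_ge 1 ‖y‖ with hy | hy
    · simp only [hk.eq_zero hy, smul_zero, tendsto_const_nhds]
    · exact (h _ (add_smul_mem_closedBall ht hy)).smul_const _

lemma tendsto_localPotential (hW : ∀ i, Measurable (W i)) (hC : ∀ i x, |W i x| ≤ C) (ht : 0 ≤ t)
    (h : ∀ z ∈ closedBall x t, Tendsto (fun i => W i z) l (𝓝 (w z))) :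
    Tendsto (fun i => localPotential t (W i) x) l (𝓝 (localPotential t w x)) := by
  refine intervalIntegral.tendsto_integral_filter_of_dominated_convergence
    (fun _ => t * (C * ∫ y : E, ‖potentialKernel y‖))
    (Eventually.of_forall fun i => (potentialKernel_intervalIntegrable ⟨hW i, C, hC i⟩ x
      0 t).aestronglyMeasurable_restrict_uIoc)
    (Eventually.of_forall fun i => ae_of_all _ fun s hs => ?_) intervalIntegrable_const
    (ae_of_all _ fun s hs => ?_)
  all_goals rw [uIoc_of_le ht] at hs
  · rw [norm_mul, norm_of_nonneg hs.1.le]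
    exact mul_le_mul hs.2 (norm_kernelAvg_le isBallKernel_potentialKernel (hC i) s x)
      (norm_nonneg _) ht
  · exact (tendsto_kernelAvg isBallKernel_potentialKernel hW hC hs.1.le fun z hz =>
      h z (closedBall_subset_closedBall hs.2 hz)).const_mul s

end DominatedConvergence

lemma isMeanValueSolution_of_tendsto {W G : ℕ → EuclideanSpace ℝ (Fin N) → ℝ} {C D : ℝ}
    (hWG : ∀ n, IsMeanValueSolution Ω (W n) (G n)) (hW : ∀ n, Measurable (W n))
    (hC : ∀ n x, |W n x| ≤ C) (hG : ∀ n, Measurable (G n)) (hD : ∀ n x, |G n x| ≤ D)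
    (hw : ∀ x, Tendsto (fun n => W n x) atTop (𝓝 (w x)))
    (hg : ∀ x, Tendsto (fun n => G n x) atTop (𝓝 (g x))) : IsMeanValueSolution Ω w g :=
  fun x hx t ht hb => tendsto_nhds_unique (hw x) <|
    ((tendsto_kernelAvg isBallKernel_mollifier hW hC ht.le fun z _ => hw z).add
      (tendsto_localPotential hG hD ht.le fun z _ => hg z)).congr fun n =>
        (hWG n x hx t ht hb).symm

lemma IsWeakSolution.exists_isMeanValueSolution (h : IsWeakSolution Ω w g) (hΩ : IsOpen Ω)
    (hw : BoundedMeasurable w) (hg : BoundedMeasurable g) :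
    ∃ W : EuclideanSpace ℝ (Fin N) → ℝ, ContinuousOn W Ω ∧ IsMeanValueSolution Ω W g ∧
      (∀ x ∈ Ω, Tendsto (fun s => mollify s w x) (𝓝[>] 0) (𝓝 (W x))) ∧ ∀ x ∉ Ω, W x = 0 := by
  have h_tendsto {x t} (ht : 0 < t) (hb : closedBall x t ⊆ Ω) :
      Tendsto (fun s => mollify s w x) (𝓝[>] 0) (𝓝 (mollify t w x + localPotential t g x)) := by
    have h_lim := (tendsto_localPotential_zero hg x).const_sub
      (mollify t w x + localPotential t g x)
    rw [sub_zero] at h_lim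
    refine h_lim.congr' ?_
    filter_upwards [Ioc_mem_nhdsGT ht] with s hs
    linarith [h.mollify_add_localPotential_eq hw hg hs.1 hs.2 hb]
  let W := Ω.indicator fun x => limUnder (𝓝[>] 0) fun s => mollify s w x
  have h_W {x t} (hx : x ∈ Ω) (ht : 0 < t) (hb : closedBall x t ⊆ Ω) :
      W x = mollify t w x + localPotential t g x :=
    (indicator_of_mem hx _).trans (h_tendsto ht hb).limUnder_eq
  have h_lim : ∀ x ∈ Ω, Tendsto (fun s => mollify s w x) (𝓝[>] 0) (𝓝 (W x)) := fun x hx => by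
    obtain ⟨t, ht, hb⟩ := nhds_basis_closedBall.mem_iff.1 (hΩ.mem_nhds hx)
    exact h_W hx ht hb ▸ h_tendsto ht hb
  refine ⟨W, (contDiffOn_one_of_mean_value (fun x hx t => h_W hx) hΩ hw hg).continuousOn,
    fun x hx t ht hb => ?_, h_lim, fun x hx => indicator_of_notMem hx _⟩
  -- Averages at different scales commute, so `W` and `w` have the same mollifications.
  obtain ⟨C, hC⟩ := hw.bounded
  have h_comm : Tendsto (fun s => mollify s (mollify t w) x) (𝓝[>] 0) (𝓝 (mollify t W x)) := by
    simp only [mollify, kernelAvg_comm isBallKernel_mollifier isBallKernel_mollifier hw _ t]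
    exact tendsto_kernelAvg isBallKernel_mollifier
      (fun s => (hw.kernelAvg isBallKernel_mollifier s).measurable)
      (norm_kernelAvg_le isBallKernel_mollifier hC) ht.le fun z hz => h_lim z (hb hz)
  rw [h_W hx ht hb, tendsto_nhds_unique h_comm (tendsto_mollify
    (hw.kernelAvg isBallKernel_mollifier t) (contDiff_mollify hw ht).continuous.continuousAt)]

end MeanValueSolutions

section DirichletSolutions

lemma le_of_forall_pos_le_add_mul {a b c : ℝ} (h : ∀ ε > 0, a ≤ b + ε * c) : a ≤ b := by
  have h_lim : Tendsto (fun ε => b + ε * c) (𝓝[>] 0) (𝓝 b) := by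
    have h_cont : Continuous fun ε => b + ε * c := by fun_prop
    simpa using (h_cont.tendsto 0).mono_left nhdsWithin_le_nhds
  refine ge_of_tendsto h_lim ?_
  filter_upwards [self_mem_nhdsWithin] with ε hε using h ε hε

lemma continuous_of_continuousOn_of_abs_le {X : Type*} [TopologicalSpace X] {Ω : Set X}
    {w ξ : X → ℝ} (hΩ : IsOpen Ω) (hw : ContinuousOn w Ω) (hξ : Continuous ξ)
    (hξ0 : ∀ x ∉ Ω, ξ x = 0) (h : ∀ x, |w x| ≤ ξ x) : Continuous w := by
  refine continuous_iff_continuousAt.2 fun x => ?_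
  by_cases hx : x ∈ Ω
  · exact hw.continuousAt (hΩ.mem_nhds hx)
  · have hwx : w x = 0 := abs_nonpos_iff.1 (hξ0 x hx ▸ h x)
    rw [ContinuousAt, hwx]
    exact squeeze_zero_norm h (hξ0 x hx ▸ hξ.tendsto x)

variable {N : ℕ} {Ω : Set (EuclideanSpace ℝ (Fin N))}
  {w v g h ξ : EuclideanSpace ℝ (Fin N) → ℝ} {x : EuclideanSpace ℝ (Fin N)} {ε C : ℝ}

/-- Continuous solutions of the Dirichlet problem `-Δw = g` in `Ω`, `w = 0` on `∂Ω`, where the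
equation holds in the sense of mean values and `w` is extended by zero to the whole space. -/
structure IsDirichletSolution (Ω : Set (EuclideanSpace ℝ (Fin N)))
    (w g : EuclideanSpace ℝ (Fin N) → ℝ) : Prop where
  continuous : Continuous w
  eq_zero : ∀ x ∉ Ω, w x = 0
  isMeanValueSolution : IsMeanValueSolution Ω w g

lemma hasCompactSupport_of_eq_zero {X : Type*} [PseudoMetricSpace X] [ProperSpace X] {Ω : Set X}
    {w : X → ℝ} (hΩ : Bornology.IsBounded Ω) (hw : ∀ x ∉ Ω, w x = 0) : HasCompactSupport w :=
  .intro hΩ.isCompact_closure fun x hx => hw x fun h => hx (subset_closure h)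

lemma isDirichletSolution_indicator (hΩ : IsOpen Ω) (hb : Bornology.IsBounded Ω)
    (hc : ContinuousOn w (closure Ω)) (hw : ContDiffOn ℝ 2 w Ω) (h0 : ∀ x ∈ frontier Ω, w x = 0)
    (hg : BoundedMeasurable g) (hwg : ∀ x ∈ Ω, -lapl w x = g x) :
    IsDirichletSolution Ω (Ω.indicator w) g := by
  have h_eq : EqOn (Ω.indicator w) w Ω := eqOn_indicator
  have h_cont : Continuous (Ω.indicator w) := continuous_indicator h0 hc
  have h_zero : ∀ x ∉ Ω, Ω.indicator w x = 0 := fun x hx => indicator_of_notMem hx _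
  refine ⟨h_cont, h_zero, isMeanValueSolution_of_contDiffOn hΩ
    (.of_hasCompactSupport h_cont (hasCompactSupport_of_eq_zero hb h_zero)) hg (hw.congr h_eq)
    fun x hx => ?_⟩
  rw [lapl_eq_of_eqOn hΩ h_eq hx, hwg x hx]

namespace IsDirichletSolution

lemma hasCompactSupport (hw : IsDirichletSolution Ω w g) (hb : Bornology.IsBounded Ω) :
    HasCompactSupport w :=
  hasCompactSupport_of_eq_zero hb hw.eq_zero

lemma boundedMeasurable (hw : IsDirichletSolution Ω w g) (hb : Bornology.IsBounded Ω) :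
    BoundedMeasurable w :=
  .of_hasCompactSupport hw.continuous (hw.hasCompactSupport hb)

lemma add (hw : IsDirichletSolution Ω w g) (hv : IsDirichletSolution Ω v h)
    (hb : Bornology.IsBounded Ω) (hg : BoundedMeasurable g) (hh : BoundedMeasurable h) :
    IsDirichletSolution Ω (fun x => w x + v x) fun x => g x + h x :=
  ⟨hw.continuous.add hv.continuous, fun x hx => by rw [hw.eq_zero x hx, hv.eq_zero x hx, add_zero],
    hw.isMeanValueSolution.add hv.isMeanValueSolution (hw.boundedMeasurable hb)
      (hv.boundedMeasurable hb) hg hh⟩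

lemma const_mul (hw : IsDirichletSolution Ω w g) (a : ℝ) :
    IsDirichletSolution Ω (fun x => a * w x) fun x => a * g x :=
  ⟨hw.continuous.const_mul a, fun x hx => by rw [hw.eq_zero x hx, mul_zero],
    hw.isMeanValueSolution.const_mul a⟩

lemma nonneg_of_const_le (hw : IsDirichletSolution Ω w g) (hΩ : IsOpen Ω)
    (hb : Bornology.IsBounded Ω) (hg : BoundedMeasurable g) (hε : 0 < ε)
    (hεg : ∀ x ∈ Ω, ε ≤ g x) (x : EuclideanSpace ℝ (Fin N)) : 0 ≤ w x := by
  obtain ⟨x₀, h_min⟩ :=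
    hw.continuous.exists_forall_le_of_hasCompactSupport (hw.hasCompactSupport hb)
  refine le_trans (not_lt.1 fun h_neg => ?_) (h_min x)
  have hx₀ : x₀ ∈ Ω := by_contra fun hx => h_neg.ne (hw.eq_zero x₀ hx)
  obtain ⟨t, ht, htΩ⟩ := nhds_basis_closedBall.mem_iff.1 (hΩ.mem_nhds hx₀)
  have h_mean : w x₀ ≤ mollify t w x₀ := (mollify_const (w x₀) t x₀).symm.le.trans
    (kernelAvg_mono isBallKernel_mollifier mollifier_nonneg (.const _)
      (hw.boundedMeasurable hb) ht.le fun z _ => h_min z)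
  have h_pot : potentialConst (EuclideanSpace ℝ (Fin N)) * ε * t ^ 2 ≤ localPotential t g x₀ :=
    (localPotential_const ε t x₀).symm.le.trans
      (localPotential_mono (.const ε) hg ht.le fun z hz => hεg z (htΩ hz))
  have h_pos : 0 < potentialConst (EuclideanSpace ℝ (Fin N)) * ε * t ^ 2 :=
    mul_pos (mul_pos potentialConst_pos hε) (pow_pos ht 2)
  linarith [hw.isMeanValueSolution x₀ hx₀ t ht htΩ]

variable (hξ : IsDirichletSolution Ω ξ fun _ => 1)

include hξ

lemma nonneg (hw : IsDirichletSolution Ω w g) (hΩ : IsOpen Ω) (hb : Bornology.IsBounded Ω)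
    (hg : BoundedMeasurable g) (hg0 : ∀ x ∈ Ω, 0 ≤ g x) (x : EuclideanSpace ℝ (Fin N)) :
    0 ≤ w x :=
  le_of_forall_pos_le_add_mul fun ε hε =>
    have h_one : BoundedMeasurable fun _ : EuclideanSpace ℝ (Fin N) => ε * 1 := .const _
    (hw.add (hξ.const_mul ε) hb hg h_one).nonneg_of_const_le hΩ hb (hg.add h_one) hε
      (fun z hz => by linarith [hg0 z hz]) x

lemma mono (hw : IsDirichletSolution Ω w g) (hv : IsDirichletSolution Ω v h) (hΩ : IsOpen Ω)
    (hb : Bornology.IsBounded Ω) (hg : BoundedMeasurable g) (hh : BoundedMeasurable h)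
    (hgh : ∀ x ∈ Ω, g x ≤ h x) (x : EuclideanSpace ℝ (Fin N)) : w x ≤ v x := by
  have h_sub := nonneg hξ (hv.add (hw.const_mul (-1)) hb hh (hg.const_mul (-1))) hΩ hb
    (hh.add (hg.const_mul (-1))) (fun z hz => by linarith [hgh z hz]) x
  linarith

lemma abs_le (hw : IsDirichletSolution Ω w g) (hΩ : IsOpen Ω) (hb : Bornology.IsBounded Ω)
    (hg : BoundedMeasurable g) (hC : ∀ x, |g x| ≤ C) (x : EuclideanSpace ℝ (Fin N)) :
    |w x| ≤ C * ξ x := by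
  have h_const (a : ℝ) : BoundedMeasurable fun _ : EuclideanSpace ℝ (Fin N) => a * 1 := .const _
  have h_lower := mono hξ (hξ.const_mul (-C)) hw hΩ hb (h_const _) hg
    (fun z _ => by linarith [(_root_.abs_le.1 (hC z)).1]) x
  have h_upper := mono hξ hw (hξ.const_mul C) hΩ hb hg (h_const _)
    (fun z _ => by linarith [(_root_.abs_le.1 (hC z)).2]) x
  exact _root_.abs_le.2 ⟨by linarith, h_upper⟩

lemma of_abs_le (hw : IsMeanValueSolution Ω w g) (hΩ : IsOpen Ω) (hc : ContinuousOn w Ω)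
    (hC : ∀ x, |w x| ≤ C * ξ x) : IsDirichletSolution Ω w g := by
  have h_zero : ∀ x ∉ Ω, C * ξ x = 0 := fun x hx => by rw [hξ.eq_zero x hx, mul_zero]
  exact ⟨continuous_of_continuousOn_of_abs_le hΩ hc (hξ.continuous.const_mul C) h_zero hC,
    fun x hx => abs_nonpos_iff.1 (h_zero x hx ▸ hC x), hw⟩

lemma of_tendsto {W G : ℕ → EuclideanSpace ℝ (Fin N) → ℝ} (hΩ : IsOpen Ω)
    (hb : Bornology.IsBounded Ω) (hWG : ∀ n, IsDirichletSolution Ω (W n) (G n))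
    (hG : ∀ n, Measurable (G n)) (hC : ∀ n x, |G n x| ≤ C)
    (hw : ∀ x, Tendsto (fun n => W n x) atTop (𝓝 (w x)))
    (hg : ∀ x, Tendsto (fun n => G n x) atTop (𝓝 (g x))) : IsDirichletSolution Ω w g := by
  have h_bound (n x) : |W n x| ≤ C * ξ x := abs_le hξ (hWG n) hΩ hb ⟨hG n, C, hC n⟩ (hC n) x
  obtain ⟨D, hD⟩ := ((hξ.boundedMeasurable hb).const_mul C).bounded
  have h_bdd (n x) : |W n x| ≤ D := ((h_bound n x).trans (le_abs_self _)).trans (hD x)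
  have hw_bdd : BoundedMeasurable w :=
    ⟨measurable_of_tendsto_metrizable (fun n => (hWG n).continuous.measurable)
      (tendsto_pi_nhds.2 hw), D, fun x => le_of_tendsto' (hw x).abs fun n => h_bdd n x⟩
  have hg_bdd : BoundedMeasurable g :=
    ⟨measurable_of_tendsto_metrizable hG (tendsto_pi_nhds.2 hg), C,
      fun x => le_of_tendsto' (hg x).abs fun n => hC n x⟩
  have h_mv : IsMeanValueSolution Ω w g :=
    isMeanValueSolution_of_tendsto (fun n => (hWG n).isMeanValueSolution)
      (fun n => (hWG n).continuous.measurable) h_bdd hG hC hw hg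
  exact of_abs_le hξ h_mv hΩ (contDiffOn_one_of_mean_value h_mv hΩ hw_bdd hg_bdd).continuousOn
    fun x => le_of_tendsto' (hw x).abs fun n => h_bound n x

end IsDirichletSolution

end DirichletSolutions

section PoissonProblem

lemma exists_linearMap_comp_eq_of_le_sublinear {V E : Type*} [AddCommGroup V] [Module ℝ V]
    [AddCommGroup E] [Module ℝ E] {P : E → ℝ} (hP_smul : ∀ c : ℝ, 0 < c → ∀ x, P (c • x) = c * P x)
    (hP_add : ∀ x y, P (x + y) ≤ P x + P y) (A : V →ₗ[ℝ] E) (L : V →ₗ[ℝ] ℝ)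
    (hL : ∀ v, L v ≤ P (A v)) : ∃ G : E →ₗ[ℝ] ℝ, (∀ v, G (A v) = L v) ∧ ∀ x, G x ≤ P x := by
  obtain ⟨s, hs⟩ := A.rangeRestrict.exists_rightInverse_of_surjective A.range_rangeRestrict
  have h_section (y : A.range) : A (s y) = y := congr_arg Subtype.val (LinearMap.congr_fun hs y)
  have hP0 : P 0 = 0 := by
    have h := hP_smul 2 two_pos 0
    rw [smul_zero] at h
    linarith
  have h_ker (v : V) (hv : A v = 0) : L v = 0 :=
    le_antisymm (by simpa [hv, hP0] using hL v) (by simpa [hv, hP0] using hL (-v))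
  obtain ⟨G, h_ext, h_le⟩ := exists_extension_of_le_sublinear ⟨A.range, L ∘ₗ s⟩ P hP_smul hP_add
    fun y => (hL (s y)).trans_eq (congr_arg P (h_section y))
  refine ⟨G, fun v => (h_ext ⟨A v, v, rfl⟩).trans ?_, h_le⟩
  have h_diff := h_ker (s ⟨A v, v, rfl⟩ - v) (by rw [map_sub, h_section, sub_self])
  rwa [map_sub, sub_eq_zero] at h_diff

variable {N : ℕ} {Ω : Set (EuclideanSpace ℝ (Fin N))}
  {w g ξ φ ψ : EuclideanSpace ℝ (Fin N) → ℝ} {x : EuclideanSpace ℝ (Fin N)} {C : ℝ}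

lemma lapl_comp {j : ℝ → ℝ} (hj : ContDiff ℝ 2 j) (hψ : ContDiff ℝ 2 ψ)
    (x : EuclideanSpace ℝ (Fin N)) :
    lapl (fun z => j (ψ z)) x =
      deriv (deriv j) (ψ x) * ∑ i : Fin N, fderiv ℝ ψ x (EuclideanSpace.single i 1) ^ 2
        + deriv j (ψ x) * lapl ψ x := by
  have hj' : ContDiff ℝ 1 (deriv j) := hj.deriv'
  have h_ψ (z) : HasFDerivAt ψ (fderiv ℝ ψ z) z :=
    (hψ.differentiable two_ne_zero z).hasFDerivAt
  have h_first (e z : EuclideanSpace ℝ (Fin N)) :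
      fderiv ℝ (fun z => j (ψ z)) z e = deriv j (ψ z) * fderiv ℝ ψ z e := by
    have h_comp : HasFDerivAt (fun z => j (ψ z)) _ z :=
      (hj.differentiable two_ne_zero _).hasDerivAt.comp_hasFDerivAt z (h_ψ z)
    rw [h_comp.fderiv, smul_apply, smul_eq_mul]
  have h_second (e : EuclideanSpace ℝ (Fin N)) :
      fderiv ℝ (fun z => deriv j (ψ z) * fderiv ℝ ψ z e) x e =
        deriv (deriv j) (ψ x) * fderiv ℝ ψ x e ^ 2
          + deriv j (ψ x) * fderiv ℝ (fun z => fderiv ℝ ψ z e) x e := by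
    have h_dir := ((contDiff_fderiv_apply hψ (m := 1) (by norm_num) e).differentiable
      one_ne_zero x).hasFDerivAt
    have h_comp := (hj'.differentiable one_ne_zero _).hasDerivAt.comp_hasFDerivAt x (h_ψ x)
    have h_mul : HasFDerivAt (fun z => deriv j (ψ z) * fderiv ℝ ψ z e) _ x := h_comp.mul h_dir
    rw [h_mul.fderiv]
    simp only [add_apply, smul_apply, smul_eq_mul, Function.comp_apply]
    ring
  simp only [lapl, h_first, h_second, Finset.sum_add_distrib, Finset.mul_sum]

/-- A smooth convex `1`-Lipschitz function vanishing at `0` and within `ε` of the absolute value. -/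
def smoothAbs (ε s : ℝ) : ℝ := √(s ^ 2 + ε ^ 2) - ε

section SmoothAbs

lemma abs_le_smoothAbs_add (ε s : ℝ) : |s| ≤ smoothAbs ε s + ε := by
  rw [smoothAbs, sub_add_cancel]
  exact abs_le_sqrt (le_add_of_nonneg_right (sq_nonneg ε))

variable {ε : ℝ} (hε : 0 < ε)

include hε

lemma smoothAbs_zero : smoothAbs ε 0 = 0 := by
  simp [smoothAbs, sqrt_sq hε.le]

lemma sq_add_sq_pos (s : ℝ) : 0 < s ^ 2 + ε ^ 2 := by positivity

lemma smoothAbs_contDiff : ContDiff ℝ ∞ (smoothAbs ε) :=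
  ((contDiff_id.pow 2).add contDiff_const).sqrt (fun s => (sq_add_sq_pos hε s).ne')
    |>.sub contDiff_const

lemma hasDerivAt_sqrt_sq_add_sq (s : ℝ) :
    HasDerivAt (fun s => √(s ^ 2 + ε ^ 2)) (s / √(s ^ 2 + ε ^ 2)) s := by
  refine (((hasDerivAt_pow 2 s).add_const (ε ^ 2)).sqrt
    (sq_add_sq_pos hε s).ne').congr_deriv ?_
  field_simp
  simp

lemma deriv_smoothAbs : deriv (smoothAbs ε) = fun s => s / √(s ^ 2 + ε ^ 2) :=
  funext fun s => ((hasDerivAt_sqrt_sq_add_sq hε s).sub_const ε).deriv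

lemma abs_deriv_smoothAbs_le_one (s : ℝ) : |deriv (smoothAbs ε) s| ≤ 1 := by
  simp only [deriv_smoothAbs hε, abs_div, abs_of_nonneg (sqrt_nonneg _)]
  exact div_le_one_of_le₀ (abs_le_sqrt (le_add_of_nonneg_right (sq_nonneg ε))) (sqrt_nonneg _)

lemma deriv_deriv_smoothAbs_nonneg (s : ℝ) : 0 ≤ deriv (deriv (smoothAbs ε)) s := by
  have h_pos := sq_add_sq_pos hε s
  have h_div : HasDerivAt (fun s => s / √(s ^ 2 + ε ^ 2)) _ s :=
    (hasDerivAt_id s).div (hasDerivAt_sqrt_sq_add_sq hε s) (sqrt_pos.2 h_pos).ne'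
  rw [deriv_smoothAbs hε, h_div.deriv]
  refine div_nonneg (sub_nonneg.2 ?_) (sq_nonneg _)
  rw [id, one_mul, mul_div_assoc', div_le_iff₀ (sqrt_pos.2 h_pos), mul_self_sqrt h_pos.le]
  nlinarith

end SmoothAbs

lemma IsDirichletSolution.isWeakSolution (hw : IsDirichletSolution Ω w g) (hΩ : IsOpen Ω)
    (hb : Bornology.IsBounded Ω) (hg : BoundedMeasurable g) (hg1 : ContDiffOn ℝ 1 g Ω) :
    IsWeakSolution Ω w g := by
  have hw2 := hw.isMeanValueSolution.contDiffOn_two hΩ (hw.boundedMeasurable hb) hg1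
  exact isWeakSolution_of_contDiffOn hΩ hw2 fun x hx =>
    hw.isMeanValueSolution.neg_lapl_eq hΩ hg hg1.continuousOn hw2 hx

section KatoInequality

variable (hξ : IsDirichletSolution Ω ξ fun _ => 1) (hΩ : IsOpen Ω) (hb : Bornology.IsBounded Ω)
  (hψ : ContDiff ℝ ∞ ψ) (hc : HasCompactSupport ψ) (hs : tsupport ψ ⊆ Ω)

include hξ hΩ hb hψ hc hs

-- Testing `-Δξ = 1` against `j ∘ ψ`, convexity of `j` gives `Δ(j ∘ ψ) ≥ j'(ψ) Δψ ≥ -|Δψ|`.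
lemma integral_comp_le_integral_torsion_mul_abs_lapl {j : ℝ → ℝ} (hj : ContDiff ℝ ∞ j)
    (hj0 : j 0 = 0) (hj1 : ∀ s, |deriv j s| ≤ 1) (hj2 : ∀ s, 0 ≤ deriv (deriv j) s) :
    ∫ x, j (ψ x) ≤ ∫ x, ξ x * |lapl ψ x| := by
  have h_two : (2 : ℕ∞ω) ≤ ((⊤ : ℕ∞) : ℕ∞ω) := by norm_cast
  have hξ0 := IsDirichletSolution.nonneg hξ hξ hΩ hb (.const 1) fun _ _ => zero_le_one
  have h_comp : ContDiff ℝ ∞ fun x => j (ψ x) := hj.comp hψ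
  have h_supp : tsupport (fun x => j (ψ x)) ⊆ tsupport ψ := tsupport_comp_subset hj0 ψ
  have h_weak := hξ.isWeakSolution hΩ hb (.const 1) contDiffOn_const _ h_comp
    (hc.of_isClosed_subset (isClosed_tsupport _) h_supp) (h_supp.trans hs)
  simp only [one_mul] at h_weak
  rw [← neg_eq_iff_eq_neg.2 h_weak, ← integral_neg]
  refine integral_mono (Continuous.integrable_of_hasCompactSupport ?_ ?_)
    (Continuous.integrable_of_hasCompactSupport ?_ ?_) fun x => ?_
  · exact (hξ.continuous.mul (continuous_lapl (h_comp.of_le h_two))).neg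
  · exact ((hξ.hasCompactSupport hb).mul_right).comp_left neg_zero
  · exact hξ.continuous.mul (continuous_lapl (hψ.of_le h_two)).abs
  · exact (hξ.hasCompactSupport hb).mul_right
  · have h_lapl : -|lapl ψ x| ≤ lapl (fun z => j (ψ z)) x := by
      rw [lapl_comp (hj.of_le h_two) (hψ.of_le h_two)]
      have h_first : -|lapl ψ x| ≤ deriv j (ψ x) * lapl ψ x := by
        refine (abs_le.1 ?_).1
        rw [abs_mul]
        exact mul_le_of_le_one_left (abs_nonneg _) (hj1 _)
      exact h_first.trans (le_add_of_nonneg_left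
        (mul_nonneg (hj2 _) (Finset.sum_nonneg fun i _ => sq_nonneg _)))
    simpa only [mul_neg, neg_neg] using
      neg_le_neg (mul_le_mul_of_nonneg_left h_lapl (hξ0 x))

lemma integral_abs_le_integral_torsion_mul_abs_lapl : ∫ x, |ψ x| ≤ ∫ x, ξ x * |lapl ψ x| := by
  refine le_of_forall_pos_le_add_mul (c := volume.real Ω) fun ε hε => ?_
  have h_int : Integrable fun x => smoothAbs ε (ψ x) :=
    ((smoothAbs_contDiff hε).continuous.comp hψ.continuous).integrable_of_hasCompactSupport
      (hc.comp_left (smoothAbs_zero hε))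
  have h_ind : Integrable (Ω.indicator fun _ => ε) :=
    (integrable_indicator_iff hΩ.measurableSet).2
      (integrableOn_const hb.measure_lt_top.ne enorm_ne_top)
  calc ∫ x, |ψ x| ≤ ∫ x, (smoothAbs ε (ψ x) + Ω.indicator (fun _ => ε) x) := by
        refine integral_mono (hψ.continuous.integrable_of_hasCompactSupport hc).abs
          (h_int.add h_ind) fun x => ?_
        by_cases hx : x ∈ Ω
        · simpa only [indicator_of_mem hx] using abs_le_smoothAbs_add ε (ψ x)
        · simp [image_eq_zero_of_notMem_tsupport (notMem_subset hs hx), smoothAbs_zero hε,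
            indicator_of_notMem hx]
    _ = (∫ x, smoothAbs ε (ψ x)) + ε * volume.real Ω := by
        rw [integral_add h_int h_ind, integral_indicator_const _ hΩ.measurableSet, smul_eq_mul,
          mul_comm]
    _ ≤ _ := add_le_add_left (integral_comp_le_integral_torsion_mul_abs_lapl hξ hΩ hb hψ hc hs
        (smoothAbs_contDiff hε) (smoothAbs_zero hε) (abs_deriv_smoothAbs_le_one hε)
        (deriv_deriv_smoothAbs_nonneg hε)) _

end KatoInequality

end PoissonProblem

section PoissonExistence

section RieszRepresentation

variable {α : Type*} [MeasurableSpace α] {μ : Measure α}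

lemma Lp_inner_le_inner_of_nonneg {ζ f h : Lp ℝ 2 μ} (hζ : 0 ≤ ζ) (hfh : f ≤ h) :
    ⟪ζ, f⟫_ℝ ≤ ⟪ζ, h⟫_ℝ := by
  rw [L2.inner_def, L2.inner_def]
  refine integral_mono_ae (L2.integrable_inner ζ f) (L2.integrable_inner ζ h) ?_
  filter_upwards [(Lp.coeFn_nonneg ζ).2 hζ, (Lp.coeFn_le f h).2 hfh] with x h_nonneg h_le
  exact mul_le_mul_of_nonneg_right h_le h_nonneg

lemma Lp_le_of_forall_inner_le [IsFiniteMeasure μ] {u v : Lp ℝ 2 μ}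
    (h : ∀ f : Lp ℝ 2 μ, 0 ≤ f → ⟪u, f⟫_ℝ ≤ ⟪v, f⟫_ℝ) : u ≤ v := by
  refine (Lp.coeFn_le u v).1 (ae_le_of_forall_setIntegral_le
    ((Lp.memLp u).integrable one_le_two) ((Lp.memLp v).integrable one_le_two) fun s hs hμs => ?_)
  have h_nonneg : 0 ≤ indicatorConstLp 2 hs hμs.ne (1 : ℝ) := by
    refine (Lp.coeFn_nonneg _).1 ?_
    filter_upwards [indicatorConstLp_coeFn (p := 2) (hs := hs) (hμs := hμs.ne) (c := (1 : ℝ))]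
      with x hx
    exact (indicator_nonneg (fun _ _ => zero_le_one) x).trans_eq hx.symm
  have h_le := h _ h_nonneg
  rwa [real_inner_comm, L2.inner_indicatorConstLp_one, real_inner_comm,
    L2.inner_indicatorConstLp_one] at h_le

lemma Lp_abs_smul_of_pos {a : ℝ} (ha : 0 < a) (f : Lp ℝ 2 μ) : |a • f| = a • |f| := by
  refine Lp.ext ?_
  filter_upwards [Lp.coeFn_abs (a • f), Lp.coeFn_abs f, Lp.coeFn_smul a f, Lp.coeFn_smul a |f|]
    with x h_abs_smul h_abs h_smul h_smul_abs
  rw [h_abs_smul, h_smul, h_smul_abs, Pi.smul_apply, Pi.smul_apply, h_abs, smul_eq_mul,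
    smul_eq_mul, abs_mul, abs_of_pos ha]

-- Hahn–Banach for the sublinear functional `f ↦ ⟪ζ, |f|⟫`, followed by Riesz representation.
lemma exists_Lp_abs_le_forall_inner_eq [IsFiniteMeasure μ] {V : Type*} [AddCommGroup V]
    [Module ℝ V] {ζ : Lp ℝ 2 μ} (hζ : 0 ≤ ζ) (A : V →ₗ[ℝ] Lp ℝ 2 μ) (L : V →ₗ[ℝ] ℝ)
    (hL : ∀ v, L v ≤ ⟪ζ, |A v|⟫_ℝ) : ∃ w : Lp ℝ 2 μ, |w| ≤ ζ ∧ ∀ v, ⟪w, A v⟫_ℝ = L v := by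
  obtain ⟨G, hGA, hG⟩ := exists_linearMap_comp_eq_of_le_sublinear
    (P := fun f : Lp ℝ 2 μ => ⟪ζ, |f|⟫_ℝ)
    (fun a ha f => by simp only [Lp_abs_smul_of_pos ha, inner_smul_right])
    (fun f h => (Lp_inner_le_inner_of_nonneg hζ (abs_add_le f h)).trans_eq (inner_add_right ..))
    A L hL
  have h_le (f : Lp ℝ 2 μ) : G f ≤ ‖ζ‖ * ‖f‖ :=
    ((hG f).trans (real_inner_le_norm _ _)).trans_eq (by rw [norm_abs_eq_norm])
  have h_bound (f : Lp ℝ 2 μ) : ‖G f‖ ≤ ‖ζ‖ * ‖f‖ := by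
    refine abs_le.2 ⟨?_, h_le f⟩
    have h_neg := h_le (-f)
    rw [map_neg, norm_neg] at h_neg
    linarith
  set w := (InnerProductSpace.toDual ℝ (Lp ℝ 2 μ)).symm (G.mkContinuous ‖ζ‖ h_bound)
  have hw (f : Lp ℝ 2 μ) : ⟪w, f⟫_ℝ = G f := InnerProductSpace.toDual_symm_apply
  refine ⟨w, abs_le'.2 ⟨?_, ?_⟩, fun v => (hw _).trans (hGA v)⟩
  · refine Lp_le_of_forall_inner_le fun f hf => ?_
    simpa only [hw, abs_of_nonneg hf] using hG f
  · refine Lp_le_of_forall_inner_le fun f hf => ?_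
    simpa only [inner_neg_left, hw, map_neg, abs_neg, abs_of_nonneg hf] using hG (-f)

lemma exists_measurable_abs_le_ae_eq {f v : α → ℝ} (hf : Measurable f) (hv : Measurable v)
    (hv0 : ∀ x, 0 ≤ v x) (h : ∀ᵐ x ∂μ, |f x| ≤ v x) :
    ∃ w, Measurable w ∧ (∀ x, |w x| ≤ v x) ∧ w =ᵐ[μ] f := by
  refine ⟨fun x => max (-v x) (min (f x) (v x)), hv.neg.max (hf.min hv), fun x => abs_le.2
    ⟨le_max_left _ _, max_le (neg_le_self (hv0 x)) (min_le_right _ _)⟩, h.mono fun x hx => ?_⟩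
  simp only [min_eq_left (abs_le.1 hx).2, max_eq_right (abs_le.1 hx).1]

end RieszRepresentation

variable {N : ℕ} {Ω : Set (EuclideanSpace ℝ (Fin N))} {g ξ : EuclideanSpace ℝ (Fin N) → ℝ}
  {C : ℝ}

/-- The space `C_c^∞(Ω)`, its elements being extended by zero to the whole space. -/
def testFunctions (Ω : Set (EuclideanSpace ℝ (Fin N))) :
    Submodule ℝ (EuclideanSpace ℝ (Fin N) → ℝ) where
  carrier := {φ | ContDiff ℝ ∞ φ ∧ HasCompactSupport φ ∧ tsupport φ ⊆ Ω}
  add_mem' h h' := ⟨h.1.add h'.1, h.2.1.add h'.2.1,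
    (tsupport_add _ _).trans (union_subset h.2.2 h'.2.2)⟩
  zero_mem' := ⟨contDiff_const, .zero, by simp [tsupport_zero]⟩
  smul_mem' a _ h := ⟨contDiff_const.mul h.1, h.2.1.mul_left,
    (tsupport_mul_subset_right).trans h.2.2⟩

lemma contDiff_two_testFunctions (φ : testFunctions Ω) : ContDiff ℝ 2 φ.1 :=
  φ.2.1.of_le (by norm_cast)

lemma memLp_lapl_testFunctions (φ : testFunctions Ω) :
    MemLp (lapl φ.1) 2 (volume.restrict Ω) :=
  (continuous_lapl (contDiff_two_testFunctions φ)).memLp_of_hasCompactSupport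
    (hasCompactSupport_lapl φ.2.2.1)

/-- The Laplacian as an operator from test functions to `L²(Ω)`. -/
def laplLp (Ω : Set (EuclideanSpace ℝ (Fin N))) :
    testFunctions Ω →ₗ[ℝ] Lp ℝ 2 (volume.restrict Ω) where
  toFun φ := (memLp_lapl_testFunctions φ).toLp
  map_add' φ ψ := by
    rw [← MemLp.toLp_add]
    exact MemLp.toLp_congr _ _ (ae_of_all _ fun x =>
      lapl_add (contDiff_two_testFunctions φ) (contDiff_two_testFunctions ψ) x)
  map_smul' a φ := by
    rw [RingHom.id_apply, ← MemLp.toLp_const_smul]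
    exact MemLp.toLp_congr _ _ (ae_of_all _ fun x =>
      lapl_const_mul a (contDiff_two_testFunctions φ) x)

lemma integrable_mul_testFunctions (hg : BoundedMeasurable g) (φ : testFunctions Ω) :
    Integrable fun x => g x * φ.1 x :=
  (φ.2.1.continuous.integrable_of_hasCompactSupport φ.2.2.1).bdd_mul
    hg.measurable.aestronglyMeasurable (ae_of_all _ hg.bounded.choose_spec)

/-- The pairing of test functions with a bounded function `g`. -/
def testPairing (Ω : Set (EuclideanSpace ℝ (Fin N))) (hg : BoundedMeasurable g) :
    testFunctions Ω →ₗ[ℝ] ℝ where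
  toFun φ := ∫ x, g x * φ.1 x
  map_add' φ ψ := by
    simp only [Submodule.coe_add, Pi.add_apply, mul_add]
    exact integral_add (integrable_mul_testFunctions hg φ) (integrable_mul_testFunctions hg ψ)
  map_smul' a φ := by
    simp only [Submodule.coe_smul, Pi.smul_apply, smul_eq_mul, mul_left_comm _ a,
      integral_const_mul, RingHom.id_apply]

lemma abs_mollify_le_mollify {w v : EuclideanSpace ℝ (Fin N) → ℝ} (hv : BoundedMeasurable v)
    (h : ∀ x, |w x| ≤ v x) (t : ℝ) (x : EuclideanSpace ℝ (Fin N)) :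
    |mollify t w x| ≤ mollify t v x := by
  refine norm_integral_le_of_norm_le (f := fun y => w (x + t • y) • mollifier y)
    (kernelAvg_integrable isBallKernel_mollifier hv t x) (ae_of_all _ fun y => ?_)
  rw [norm_smul, Real.norm_of_nonneg (mollifier_nonneg y)]
  exact mul_le_mul_of_nonneg_right (h _) (mollifier_nonneg y)

variable (hξ : IsDirichletSolution Ω ξ fun _ => 1) (hΩ : IsOpen Ω) (hb : Bornology.IsBounded Ω)

include hξ hΩ hb

lemma testPairing_le_integral_torsion (hg : BoundedMeasurable g) (hC : ∀ x, |g x| ≤ C)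
    (φ : testFunctions Ω) :
    testPairing Ω hg φ ≤ ∫ x in Ω, C * ξ x * |lapl φ.1 x| := by
  have hC0 : 0 ≤ C := (abs_nonneg _).trans (hC 0)
  calc testPairing Ω hg φ ≤ ∫ x, C * |φ.1 x| :=
        integral_mono (integrable_mul_testFunctions hg φ)
          ((φ.2.1.continuous.integrable_of_hasCompactSupport φ.2.2.1).abs.const_mul C) fun x =>
            (le_abs_self _).trans ((abs_mul _ _).trans_le
              (mul_le_mul_of_nonneg_right (hC x) (abs_nonneg _)))
    _ ≤ C * ∫ x, ξ x * |lapl φ.1 x| := by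
        rw [integral_const_mul]
        exact mul_le_mul_of_nonneg_left
          (integral_abs_le_integral_torsion_mul_abs_lapl hξ hΩ hb φ.2.1 φ.2.2.1 φ.2.2.2) hC0
    _ = ∫ x in Ω, C * ξ x * |lapl φ.1 x| := by
        rw [setIntegral_eq_integral_of_forall_compl_eq_zero fun x hx => by
          rw [hξ.eq_zero x hx, mul_zero, zero_mul], ← integral_const_mul]
        simp only [mul_assoc]

lemma exists_isWeakSolution_abs_le (hg : BoundedMeasurable g) (hC : ∀ x, |g x| ≤ C) :
    ∃ w, Measurable w ∧ (∀ x, |w x| ≤ C * ξ x) ∧ IsWeakSolution Ω w g := by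
  have hCξ (x : EuclideanSpace ℝ (Fin N)) : 0 ≤ C * ξ x :=
    mul_nonneg ((abs_nonneg _).trans (hC 0))
      (IsDirichletSolution.nonneg hξ hξ hΩ hb (.const 1) (fun _ _ => zero_le_one) x)
  have h_mem : MemLp (fun x => C * ξ x) 2 (volume.restrict Ω) :=
    (hξ.continuous.const_mul C).memLp_of_hasCompactSupport (hξ.hasCompactSupport hb).mul_left
  have : IsFiniteMeasure (volume.restrict Ω) :=
    isFiniteMeasure_restrict.2 hb.measure_lt_top.ne
  obtain ⟨W, hWξ, hW⟩ := exists_Lp_abs_le_forall_inner_eq (ζ := h_mem.toLp)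
    ((Lp.coeFn_nonneg _).1 (h_mem.coeFn_toLp.mono fun x hx => (hCξ x).trans_eq hx.symm))
    (-laplLp Ω) (testPairing Ω hg) fun φ => by
      refine (testPairing_le_integral_torsion hξ hΩ hb hg hC φ).trans_eq ?_
      rw [LinearMap.neg_apply, abs_neg, L2.inner_def]
      refine integral_congr_ae ?_
      filter_upwards [h_mem.coeFn_toLp, Lp.coeFn_abs (laplLp Ω φ),
        (memLp_lapl_testFunctions φ).coeFn_toLp] with x hx h_abs h_lapl
      rw [hx, h_abs, real_inner_comm]
      exact congr_arg (fun a => C * ξ x * |a|) h_lapl.symm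
  have hW_le : ∀ᵐ x ∂volume.restrict Ω, |W x| ≤ C * ξ x := by
    filter_upwards [(Lp.coeFn_le _ _).2 hWξ, Lp.coeFn_abs W, h_mem.coeFn_toLp] with x h_le h_abs hx
    rwa [h_abs, hx] at h_le
  obtain ⟨w, hw, hwξ, hwW⟩ := exists_measurable_abs_le_ae_eq (Lp.stronglyMeasurable W).measurable
    (hξ.continuous.const_mul C).measurable hCξ hW_le
  refine ⟨w, hw, hwξ, fun φ hφ hφc hφs => ?_⟩
  rw [← setIntegral_eq_integral_of_forall_compl_eq_zero (s := Ω) fun x hx => by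
    rw [abs_nonpos_iff.1 ((hwξ x).trans_eq (by rw [hξ.eq_zero x hx, mul_zero])), zero_mul]]
  refine Eq.trans ?_ (congr_arg Neg.neg (hW ⟨φ, hφ, hφc, hφs⟩))
  rw [LinearMap.neg_apply, inner_neg_right, neg_neg, L2.inner_def]
  refine integral_congr_ae ?_
  filter_upwards [hwW, (memLp_lapl_testFunctions ⟨φ, hφ, hφc, hφs⟩).coeFn_toLp] with x hx h_lapl
  rw [hx, real_inner_comm]
  exact congr_arg (W x * ·) h_lapl.symm

lemma exists_isDirichletSolution (hg : BoundedMeasurable g) :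
    ∃ w, IsDirichletSolution Ω w g := by
  obtain ⟨C, hC⟩ := hg.bounded
  obtain ⟨w, hw, hwξ, h_weak⟩ := exists_isWeakSolution_abs_le hξ hΩ hb hg hC
  have hξ_bdd := (hξ.boundedMeasurable hb).const_mul C
  have hw_bdd : BoundedMeasurable w :=
    ⟨hw, hξ_bdd.bounded.imp fun D hD x => ((hwξ x).trans (le_abs_self _)).trans (hD x)⟩
  obtain ⟨W, hW, h_mv, h_lim, h_zero⟩ := h_weak.exists_isMeanValueSolution hΩ hw_bdd hg
  refine ⟨W, .of_abs_le (C := C) hξ h_mv hΩ hW fun x => ?_⟩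
  by_cases hx : x ∈ Ω
  · exact le_of_tendsto_of_tendsto' (h_lim x hx).abs
      (tendsto_mollify hξ_bdd (hξ.continuous.const_mul C).continuousAt) fun s =>
        abs_mollify_le_mollify hξ_bdd hwξ s x
  · rw [h_zero x hx, hξ.eq_zero x hx, abs_zero, mul_zero]

end PoissonExistence

section MaximalSolutions

/-- Nonlinearities `F` for which `-MΔu = F(u)`, `M ≥ 1`, is solved by monotone iteration below `tξ`
when the torsion function `ξ` is bounded by `X`: `F` is increasing, `tξ` is a supersolution, and
`F` is subhomogeneous of degree `α < 1` on the range of `tξ`. -/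
structure IsSublinearNonlinearity (F : ℝ → ℝ) (α t X : ℝ) : Prop where
  continuous : Continuous F
  monotoneOn : MonotoneOn F (Ici 0)
  map_zero : F 0 = 0
  pos : 0 < t
  map_mul_le : F (t * X) ≤ t
  exponent_lt_one : α < 1
  rpow_mul_le : ∀ τ s, 0 < τ → τ ≤ 1 → s ∈ Icc 0 (t * X) → τ ^ α * F s ≤ F (τ * s)

/-- The measurable functions between `0` and `tξ`. -/
def torsionInterval {N : ℕ} (ξ : EuclideanSpace ℝ (Fin N) → ℝ) (t : ℝ) :
    Set (EuclideanSpace ℝ (Fin N) → ℝ) :=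
  {v | Measurable v ∧ ∀ x, v x ∈ Icc 0 (t * ξ x)}

/-- The largest solution of `-MΔu = F(u)` in `Ω`, `u = 0` on `∂Ω`, between `0` and `tξ`; it
dominates all subsolutions in this interval. -/
structure IsMaximalSolution {N : ℕ} (Ω : Set (EuclideanSpace ℝ (Fin N)))
    (ξ : EuclideanSpace ℝ (Fin N) → ℝ) (F : ℝ → ℝ) (t M : ℝ)
    (u : EuclideanSpace ℝ (Fin N) → ℝ) : Prop where
  isDirichletSolution : IsDirichletSolution Ω u fun x => F (u x) / M
  mem_Icc : ∀ x, u x ∈ Icc 0 (t * ξ x)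
  le_of_subsolution : ∀ v g, IsDirichletSolution Ω v g → BoundedMeasurable g →
    (∀ x, v x ∈ Icc 0 (t * ξ x)) → (∀ x ∈ Ω, g x ≤ F (v x) / M) → ∀ x, v x ≤ u x

namespace IsSublinearNonlinearity

variable {F : ℝ → ℝ} {α t X M s : ℝ}

lemma nonneg (hF : IsSublinearNonlinearity F α t X) (hs : 0 ≤ s) : 0 ≤ F s :=
  hF.map_zero.symm.trans_le (hF.monotoneOn self_mem_Ici hs hs)

lemma div_mono (hF : IsSublinearNonlinearity F α t X) (hM : 0 ≤ M) {s' : ℝ} (hs : 0 ≤ s)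
    (h : s ≤ s') : F s / M ≤ F s' / M :=
  div_le_div_of_nonneg_right (hF.monotoneOn hs (hs.trans h) h) hM

lemma abs_div_le (hF : IsSublinearNonlinearity F α t X) (hM : 1 ≤ M) (hs : s ∈ Icc 0 (t * X)) :
    |F s / M| ≤ t := by
  have h_nonneg := hF.nonneg hs.1
  rw [abs_of_nonneg (div_nonneg h_nonneg (zero_le_one.trans hM))]
  exact (div_le_self h_nonneg hM).trans
    ((hF.monotoneOn hs.1 (hs.1.trans hs.2) hs.2).trans hF.map_mul_le)

lemma add_mul_div_mul_self_mem_Icc (hF : IsSublinearNonlinearity F α t X) (hM : 1 ≤ M) {c d : ℝ}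
    (hc : 0 ≤ c) (hd : 0 ≤ d) (hs : s ∈ Icc 0 (t * X)) :
    c * s ^ 2 + d * (F s / M * s) ∈ Icc 0 (c * (t * X) ^ 2 + d * (t * (t * X))) := by
  have h_nonneg : 0 ≤ F s / M := div_nonneg (hF.nonneg hs.1) (zero_le_one.trans hM)
  have h_le : F s / M ≤ t := (le_abs_self _).trans (hF.abs_div_le hM hs)
  have ht : 0 < t := hF.pos
  obtain ⟨hs0, hs1⟩ := hs
  exact ⟨by positivity, by gcongr⟩

end IsSublinearNonlinearity

variable {N : ℕ} {Ω : Set (EuclideanSpace ℝ (Fin N))}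
  {ξ u v : EuclideanSpace ℝ (Fin N) → ℝ} {F : ℝ → ℝ} {α t X M M' : ℝ}

lemma mem_Icc_of_mem_torsionInterval (ht : 0 ≤ t) (hX : ∀ x, ξ x ≤ X)
    {x : EuclideanSpace ℝ (Fin N)} (hv : v x ∈ Icc 0 (t * ξ x)) : v x ∈ Icc 0 (t * X) :=
  ⟨hv.1, hv.2.trans (mul_le_mul_of_nonneg_left (hX x) ht)⟩

lemma boundedMeasurable_nonlinearity (hF : IsSublinearNonlinearity F α t X) (hX : ∀ x, ξ x ≤ X)
    (hM : 1 ≤ M) (hv : v ∈ torsionInterval ξ t) : BoundedMeasurable fun x => F (v x) / M :=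
  ⟨(hF.continuous.measurable.comp hv.1).div_const M, t, fun x =>
    hF.abs_div_le hM (mem_Icc_of_mem_torsionInterval hF.pos.le hX (hv.2 x))⟩

lemma IsMaximalSolution.mem_torsionInterval (hu : IsMaximalSolution Ω ξ F t M u) :
    u ∈ torsionInterval ξ t :=
  ⟨hu.isDirichletSolution.continuous.measurable, hu.mem_Icc⟩

section Existence

variable (hξ : IsDirichletSolution Ω ξ fun _ => 1) (hΩ : IsOpen Ω) (hb : Bornology.IsBounded Ω)
  (hF : IsSublinearNonlinearity F α t X) (hX : ∀ x, ξ x ≤ X) (hM : 1 ≤ M)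

include hξ hΩ hb hF hX hM

lemma exists_monotone_solutionMap : ∃ S : torsionInterval ξ t → torsionInterval ξ t,
    Monotone S ∧ ∀ v, IsDirichletSolution Ω (S v).1 fun x => F (v.1 x) / M := by
  have hM0 : 0 ≤ M := zero_le_one.trans hM
  choose S hS using fun v : torsionInterval ξ t =>
    exists_isDirichletSolution hξ hΩ hb (boundedMeasurable_nonlinearity hF hX hM v.2)
  have h_nonneg (v x) : 0 ≤ S v x :=
    IsDirichletSolution.nonneg hξ (hS v) hΩ hb (boundedMeasurable_nonlinearity hF hX hM v.2)
      (fun z _ => div_nonneg (hF.nonneg (v.2.2 z).1) hM0) x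
  have h_le (v x) : S v x ≤ t * ξ x :=
    (le_abs_self _).trans (IsDirichletSolution.abs_le hξ (hS v) hΩ hb
      (boundedMeasurable_nonlinearity hF hX hM v.2) (fun z => hF.abs_div_le hM
        (mem_Icc_of_mem_torsionInterval hF.pos.le hX (v.2.2 z))) x)
  refine ⟨fun v => ⟨S v, (hS v).continuous.measurable, fun x => ⟨h_nonneg v x, h_le v x⟩⟩,
    fun v v' hvv' => ?_, hS⟩
  exact IsDirichletSolution.mono hξ (hS v) (hS v') hΩ hb
    (boundedMeasurable_nonlinearity hF hX hM v.2) (boundedMeasurable_nonlinearity hF hX hM v'.2)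
    fun z _ => hF.div_mono hM0 (v.2.2 z).1 (hvv' z)

lemma exists_isMaximalSolution : ∃ u, IsMaximalSolution Ω ξ F t M u := by
  have hM0 : 0 ≤ M := zero_le_one.trans hM
  obtain ⟨S, hS_mono, hS⟩ := exists_monotone_solutionMap hξ hΩ hb hF hX hM
  have hξ0 (x) : 0 ≤ t * ξ x :=
    mul_nonneg hF.pos.le
      (IsDirichletSolution.nonneg hξ hξ hΩ hb (.const 1) (fun _ _ => zero_le_one) x)
  let v₀ : torsionInterval ξ t := ⟨fun x => t * ξ x, hξ.continuous.measurable.const_mul t,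
    fun x => ⟨hξ0 x, le_rfl⟩⟩
  let W (n : ℕ) (x : EuclideanSpace ℝ (Fin N)) : ℝ := (S^[n] v₀).1 x
  have hW_mem (n x) : W n x ∈ Icc 0 (t * ξ x) := (S^[n] v₀).2.2 x
  have hW_anti (x) : Antitone fun n => W n x := fun m n hmn =>
    hS_mono.antitone_iterate_of_map_le (fun z => (S v₀).2.2 z |>.2) hmn x
  have hW_sol (n) : IsDirichletSolution Ω (W (n + 1)) fun x => F (W n x) / M := by
    have h := hS (S^[n] v₀)
    rwa [← Function.iterate_succ_apply' S] at h
  have hW_lim (x) : Tendsto (fun n => W n x) atTop (𝓝 (⨅ n, W n x)) :=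
    tendsto_atTop_ciInf (hW_anti x) ⟨0, forall_mem_range.2 fun n => (hW_mem n x).1⟩
  refine ⟨fun x => ⨅ n, W n x, ?_, fun x =>
    isClosed_Icc.mem_of_tendsto (hW_lim x) (Eventually.of_forall fun n => hW_mem n x),
    fun v g hv hg hv_mem hvg x => ?_⟩
  · exact .of_tendsto (C := t) hξ hΩ hb hW_sol
      (fun n => (boundedMeasurable_nonlinearity hF hX hM (S^[n] v₀).2).measurable)
      (fun n x => hF.abs_div_le hM (mem_Icc_of_mem_torsionInterval hF.pos.le hX (hW_mem n x)))
      (fun x => (hW_lim x).comp (tendsto_add_atTop_nat 1))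
      fun x => ((hF.continuous.tendsto _).comp (hW_lim x)).div_const M
  · refine ge_of_tendsto' (hW_lim x) fun n => ?_
    induction n generalizing x with
    | zero => exact (hv_mem x).2
    | succ n ih =>
      exact IsDirichletSolution.mono hξ hv (hW_sol n) hΩ hb hg
        (boundedMeasurable_nonlinearity hF hX hM (S^[n] v₀).2)
        (fun z hz => (hvg z hz).trans (hF.div_mono hM0 (hv_mem z).1 (ih z))) x

end Existence

namespace IsMaximalSolution

lemma antitone (hF : IsSublinearNonlinearity F α t X) (hX : ∀ x, ξ x ≤ X)
    (hu : IsMaximalSolution Ω ξ F t M u) (hv : IsMaximalSolution Ω ξ F t M' v) (hM : 1 ≤ M)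
    (hMM' : M ≤ M') (x : EuclideanSpace ℝ (Fin N)) : v x ≤ u x :=
  hu.le_of_subsolution v _ hv.isDirichletSolution
    (boundedMeasurable_nonlinearity hF hX (hM.trans hMM') hv.mem_torsionInterval) hv.mem_Icc
    (fun z _ => div_le_div_of_nonneg_left (hF.nonneg (hv.mem_Icc z).1)
      (zero_lt_one.trans_le hM) hMM') x

-- For `τ = (M / M') ^ (1 / (1 - α))` one has `τ / M = τ ^ α / M'`, so that `τ * u` is a subsolution
-- of the problem with parameter `M'`.
lemma rpow_mul_le (hF : IsSublinearNonlinearity F α t X) (hX : ∀ x, ξ x ≤ X)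
    (hu : IsMaximalSolution Ω ξ F t M u) (hv : IsMaximalSolution Ω ξ F t M' v) (hM : 1 ≤ M)
    (hMM' : M ≤ M') (x : EuclideanSpace ℝ (Fin N)) :
    M ^ (1 / (1 - α)) * u x ≤ M' ^ (1 / (1 - α)) * v x := by
  have hM0 : 0 < M := zero_lt_one.trans_le hM
  have hM'0 : 0 < M' := hM0.trans_le hMM'
  have hα : 0 < 1 - α := sub_pos.2 hF.exponent_lt_one
  have h_ratio : 0 < M / M' := div_pos hM0 hM'0
  set τ := (M / M') ^ (1 / (1 - α)) with hτ
  have hτ0 : 0 < τ := rpow_pos_of_pos h_ratio _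
  have hτ1 : τ ≤ 1 := rpow_le_one h_ratio.le ((div_le_one hM'0).2 hMM') (by positivity)
  have hτα : τ / M = τ ^ α / M' := by
    have h_split : τ = τ ^ α * τ ^ (1 - α) := by
      rw [← rpow_add hτ0, add_sub_cancel, rpow_one]
    have h_root : τ ^ (1 - α) = M / M' := by
      rw [hτ, ← rpow_mul h_ratio.le, one_div_mul_cancel hα.ne', rpow_one]
    rw [h_root] at h_split
    rw [div_eq_div_iff hM0.ne' hM'0.ne']
    nth_rewrite 1 [h_split]
    field_simp
  have h_le : τ * u x ≤ v x := by
    refine hv.le_of_subsolution _ _ (hu.isDirichletSolution.const_mul τ)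
      ((boundedMeasurable_nonlinearity hF hX hM hu.mem_torsionInterval).const_mul τ)
      (fun z => ⟨mul_nonneg hτ0.le (hu.mem_Icc z).1,
        (mul_le_of_le_one_left (hu.mem_Icc z).1 hτ1).trans (hu.mem_Icc z).2⟩) (fun z _ => ?_) x
    rw [mul_div_left_comm, hτα, mul_div_assoc', mul_comm]
    exact div_le_div_of_nonneg_right (hF.rpow_mul_le τ (u z) hτ0 hτ1
      (mem_Icc_of_mem_torsionInterval hF.pos.le hX (hu.mem_Icc z))) hM'0.le
  rwa [hτ, div_rpow hM0.le hM'0.le, div_mul_eq_mul_div, div_le_iff₀' (rpow_pos_of_pos hM'0 _)]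
    at h_le

end IsMaximalSolution

lemma continuousOn_of_antitoneOn_of_monotoneOn_mul {X : Type*} [TopologicalSpace X]
    [LinearOrder X] {f h : X → ℝ} {s : Set X} (hf : AntitoneOn f s)
    (hhf : MonotoneOn (fun x => h x * f x) s) (hh : ContinuousOn h s) (hh0 : ∀ x ∈ s, 0 < h x) :
    ContinuousOn f s := by
  intro a ha
  have h_tendsto : Tendsto (fun x => |h a * f a / h x - f a|) (𝓝[s] a) (𝓝 0) := by
    have h_cont := (((continuousWithinAt_const (b := h a * f a)).div (hh a ha)
      (hh0 a ha).ne').sub_const (f a)).abs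
    simpa [ContinuousWithinAt, mul_div_cancel_left₀ _ (hh0 a ha).ne'] using h_cont
  refine tendsto_iff_dist_tendsto_zero.2 (squeeze_zero' (Eventually.of_forall fun _ => dist_nonneg)
    ?_ h_tendsto)
  filter_upwards [self_mem_nhdsWithin] with x hx
  have h_mem : f x ∈ uIcc (f a) (h a * f a / h x) := by
    rcases le_total a x with hax | hxa
    · exact Icc_subset_uIcc' ⟨(div_le_iff₀' (hh0 x hx)).2 (hhf ha hx hax), hf ha hx hax⟩
    · exact Icc_subset_uIcc ⟨hf hx ha hxa, (le_div_iff₀' (hh0 x hx)).2 (hhf hx ha hxa)⟩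
  exact abs_sub_left_of_mem_uIcc h_mem

lemma continuousOn_maximalSolution (hF : IsSublinearNonlinearity F α t X) (hX : ∀ x, ξ x ≤ X)
    {U : ℝ → EuclideanSpace ℝ (Fin N) → ℝ} (hU : ∀ M, 1 ≤ M → IsMaximalSolution Ω ξ F t M (U M))
    (x : EuclideanSpace ℝ (Fin N)) : ContinuousOn (fun M => U M x) (Ici 1) := by
  have h_pos (M) (hM : M ∈ Ici (1 : ℝ)) : 0 < M := zero_lt_one.trans_le hM
  exact continuousOn_of_antitoneOn_of_monotoneOn_mul
    (fun M hM M' hM' h => (hU M hM).antitone hF hX (hU M' hM') hM h x)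
    (fun M hM M' hM' h => (hU M hM).rpow_mul_le hF hX (hU M' hM') hM h x)
    (fun M hM => (continuousAt_rpow_const _ _ (.inl (h_pos M hM).ne')).continuousWithinAt)
    fun M hM => rpow_pos_of_pos (h_pos M hM) _

lemma exists_one_add_eq_of_continuousOn {J : ℝ → ℝ} {B : ℝ} (hJ : ContinuousOn J (Ici 1))
    (hJ0 : ∀ M ∈ Ici 1, J M ∈ Icc 0 B) : ∃ M, 1 ≤ M ∧ 1 + J M = M := by
  have hB : 1 ≤ 1 + B := le_add_of_nonneg_right (nonempty_Icc.1 ⟨_, hJ0 1 self_mem_Ici⟩)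
  have h_zero : (0 : ℝ) ∈ Icc (1 + J (1 + B) - (1 + B)) (1 + J 1 - 1) :=
    ⟨by linarith [(hJ0 (1 + B) hB).2], by linarith [(hJ0 1 self_mem_Ici).1]⟩
  obtain ⟨M, hM, h_eq⟩ := intermediate_value_Icc' hB
    (((hJ.mono Icc_subset_Ici_self).const_add 1).sub continuousOn_id) h_zero
  exact ⟨M, hM.1, sub_eq_zero.1 h_eq⟩

lemma exists_isMaximalSolution_parameter_eq (hξ : IsDirichletSolution Ω ξ fun _ => 1)
    (hΩ : IsOpen Ω) (hb : Bornology.IsBounded Ω) (hF : IsSublinearNonlinearity F α t X)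
    (hX : ∀ x, ξ x ≤ X) {c d : ℝ} (hc : 0 ≤ c) (hd : 0 ≤ d) :
    ∃ M u, 1 ≤ M ∧ IsMaximalSolution Ω ξ F t M u ∧
      1 + ∫ x in Ω, (c * u x ^ 2 + d * (F (u x) / M * u x)) = M := by
  choose! U hU using fun M (hM : 1 ≤ M) => exists_isMaximalSolution hξ hΩ hb hF hX hM
  have : IsFiniteMeasure (volume.restrict Ω) :=
    isFiniteMeasure_restrict.2 hb.measure_lt_top.ne
  have h_mem (M) (hM : 1 ≤ M) (x) := hF.add_mul_div_mul_self_mem_Icc hM hc hd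
    (mem_Icc_of_mem_torsionInterval hF.pos.le hX ((hU M hM).mem_Icc x))
  have h_cont (x) :
      ContinuousOn (fun M => c * U M x ^ 2 + d * (F (U M x) / M * U M x)) (Ici 1) := by
    have hUx := continuousOn_maximalSolution hF hX hU x
    have h_div := (hF.continuous.comp_continuousOn hUx).div continuousOn_id fun M hM =>
      (zero_lt_one.trans_le hM).ne'
    exact (continuousOn_const.mul (hUx.pow 2)).add (continuousOn_const.mul (h_div.mul hUx))
  have h_continuous (M) (hM : 1 ≤ M) :
      Continuous fun x => c * U M x ^ 2 + d * (F (U M x) / M * U M x) := by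
    have h_cont := (hU M hM).isDirichletSolution.continuous
    exact (continuous_const.mul (h_cont.pow 2)).add
      (continuous_const.mul (((hF.continuous.comp h_cont).div_const M).mul h_cont))
  have h_abs (M) (hM : 1 ≤ M) (x) := (abs_of_nonneg (h_mem M hM x).1).trans_le (h_mem M hM x).2
  obtain ⟨M, hM, h_eq⟩ := exists_one_add_eq_of_continuousOn
    (continuousOn_of_dominated (μ := volume.restrict Ω)
    (fun M hM => (h_continuous M hM).aestronglyMeasurable) (fun M hM => ae_of_all _ (h_abs M hM))
    (integrable_const _) (ae_of_all _ h_cont)) fun M hM =>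
      ⟨integral_nonneg fun x => (h_mem M hM x).1, integral_mono_of_nonneg
        (ae_of_all _ fun x => (h_mem M hM x).1) (integrable_const _)
        (ae_of_all _ fun x => (h_mem M hM x).2)⟩
  exact ⟨M, U M, hM, hU M hM, h_eq⟩

end MaximalSolutions

section Energy

lemma toReal_eLpNorm_two_sq {α E : Type*} [MeasurableSpace α] [NormedAddCommGroup E]
    {μ : Measure α} {f : α → E} (hf : AEStronglyMeasurable f μ) :
    (eLpNorm f 2 μ).toReal ^ 2 = ∫ x, ‖f x‖ ^ 2 ∂μ := by
  rw [toReal_eLpNorm hf, lpNorm_eq_integral_norm_rpow_toReal two_ne_zero ENNReal.ofNat_ne_top hf]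
  simp only [ENNReal.toReal_ofNat, rpow_two, ← one_div, ← sqrt_eq_rpow]
  exact sq_sqrt (integral_nonneg fun x => sq_nonneg _)

lemma integral_eq_of_monotone_of_tendsto {α : Type*} [MeasurableSpace α] {μ : Measure α}
    {f : ℕ → α → ℝ} {F : α → ℝ} {a : ℝ} (hf : ∀ n, Integrable (f n) μ) (hf0 : ∀ n x, 0 ≤ f n x)
    (h_mono : ∀ x, Monotone fun n => f n x)
    (h_lim : ∀ᵐ x ∂μ, Tendsto (fun n => f n x) atTop (𝓝 (F x)))
    (h_int : Tendsto (fun n => ∫ x, f n x ∂μ) atTop (𝓝 a)) : ∫ x, F x ∂μ = a := by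
  have hF0 : 0 ≤ᵐ[μ] F := h_lim.mono fun x hx => ge_of_tendsto' hx fun n => hf0 n x
  have hF : AEStronglyMeasurable F μ :=
    aestronglyMeasurable_of_tendsto_ae atTop (fun n => (hf n).aestronglyMeasurable) h_lim
  have h_lintegral : Tendsto (fun n => ENNReal.ofReal (∫ x, f n x ∂μ)) atTop
      (𝓝 (∫⁻ x, ENNReal.ofReal (F x) ∂μ)) := by
    simp only [ofReal_integral_eq_lintegral_ofReal (hf _) (ae_of_all _ (hf0 _))]
    exact lintegral_tendsto_of_tendsto_of_monotone
      (fun n => (hf n).aestronglyMeasurable.aemeasurable.ennreal_ofReal)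
      (ae_of_all _ fun x m n hmn => ENNReal.ofReal_le_ofReal (h_mono x hmn))
      (h_lim.mono fun x hx => (ENNReal.continuous_ofReal.tendsto _).comp hx)
  rw [integral_eq_lintegral_of_nonneg_ae hF0 hF,
    tendsto_nhds_unique h_lintegral ((ENNReal.continuous_ofReal.tendsto _).comp h_int),
    ENNReal.toReal_ofReal (ge_of_tendsto' h_int fun n => integral_nonneg (hf0 n))]

/-- A `C¹` approximation of the identity function on `[0, ∞)` that vanishes on `(-∞, 1/n]` and has
slope `1` on `[2/n, ∞)`. -/
def softThreshold (n : ℕ) (s : ℝ) : ℝ := ∫ r in (0 : ℝ)..s, smoothTransition (n * r - 1)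

section SoftThreshold

variable {n : ℕ} {s : ℝ}

lemma continuous_smoothTransition_mul_sub_one (n : ℕ) :
    Continuous fun r : ℝ => smoothTransition (n * r - 1) :=
  smoothTransition.continuous.comp (by fun_prop)

lemma deriv_softThreshold (n : ℕ) :
    deriv (softThreshold n) = fun s => smoothTransition (n * s - 1) :=
  funext fun s => (continuous_smoothTransition_mul_sub_one n).deriv_integral _ 0 s

lemma contDiff_softThreshold (n : ℕ) : ContDiff ℝ 1 (softThreshold n) := by
  refine contDiff_one_iff_deriv.2 ⟨fun s => ?_, ?_⟩
  · exact ((continuous_smoothTransition_mul_sub_one n).integral_hasStrictDerivAt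
      0 s).hasDerivAt.differentiableAt
  · rw [deriv_softThreshold]
    exact continuous_smoothTransition_mul_sub_one n

lemma softThreshold_eq_zero (h : n * s < 1) : softThreshold n s = 0 := by
  refine intervalIntegral.integral_zero_ae (ae_of_all _ fun r hr => ?_)
  refine smoothTransition.zero_of_nonpos (sub_nonpos.2 ?_)
  have h_le : r ≤ max 0 s := (uIoc_subset_uIcc hr).2
  calc n * r ≤ n * max 0 s := mul_le_mul_of_nonneg_left h_le n.cast_nonneg
    _ ≤ 1 := by rcases max_cases 0 s with ⟨h_max, -⟩ | ⟨h_max, -⟩ <;> rw [h_max] <;> linarith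

lemma zero_notMem_tsupport_softThreshold (n : ℕ) : (0 : ℝ) ∉ tsupport (softThreshold n) := by
  rw [notMem_tsupport_iff_eventuallyEq]
  have h_open : IsOpen {s : ℝ | n * s < 1} := isOpen_lt (by fun_prop) continuous_const
  filter_upwards [h_open.mem_nhds (by simp : (0 : ℝ) ∈ {s : ℝ | n * s < 1})] with s hs
  exact softThreshold_eq_zero hs

lemma softThreshold_mem_Icc (n : ℕ) (hs : 0 ≤ s) : softThreshold n s ∈ Icc 0 s := by
  refine ⟨intervalIntegral.integral_nonneg hs fun r _ => smoothTransition.nonneg _, ?_⟩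
  calc softThreshold n s ≤ ∫ _ in (0 : ℝ)..s, (1 : ℝ) :=
        intervalIntegral.integral_mono_on hs
          ((continuous_smoothTransition_mul_sub_one n).intervalIntegrable _ _)
          intervalIntegrable_const fun r _ => smoothTransition.le_one _
    _ = s := by simp

lemma monotone_deriv_softThreshold (hs : 0 ≤ s) :
    Monotone fun n => deriv (softThreshold n) s := fun m n hmn => by
  simp only [deriv_softThreshold]
  exact smoothTransition.monotone (by gcongr)

lemma tendsto_deriv_softThreshold (hs : 0 < s) :
    Tendsto (fun n => deriv (softThreshold n) s) atTop (𝓝 1) := by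
  refine tendsto_const_nhds.congr' ?_
  filter_upwards [tendsto_natCast_atTop_atTop.eventually_ge_atTop (2 / s)] with n hn
  simp only [deriv_softThreshold]
  refine (smoothTransition.one_of_one_le ?_).symm
  linarith [(div_le_iff₀ hs).1 hn]

lemma tendsto_softThreshold (hs : 0 ≤ s) :
    Tendsto (fun n => softThreshold n s) atTop (𝓝 s) := by
  have h_lim : Tendsto (fun n => softThreshold n s) atTop (𝓝 (∫ _ in (0 : ℝ)..s, (1 : ℝ))) := by
    refine intervalIntegral.tendsto_integral_filter_of_dominated_convergence (fun _ => (1 : ℝ))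
      (Eventually.of_forall fun n =>
        (continuous_smoothTransition_mul_sub_one n).aestronglyMeasurable)
      (Eventually.of_forall fun n => ae_of_all _ fun r _ => ?_) intervalIntegrable_const
      (ae_of_all _ fun r hr => ?_)
    · rw [Real.norm_of_nonneg (smoothTransition.nonneg _)]
      exact smoothTransition.le_one _
    · rw [uIoc_of_le hs] at hr
      simpa only [deriv_softThreshold] using tendsto_deriv_softThreshold hr.1
  simpa using h_lim

end SoftThreshold

variable {N : ℕ} {Ω : Set (EuclideanSpace ℝ (Fin N))} {w ψ : EuclideanSpace ℝ (Fin N) → ℝ}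

lemma norm_gradient_sq (w : EuclideanSpace ℝ (Fin N) → ℝ) (x : EuclideanSpace ℝ (Fin N)) :
    ‖gradient w x‖ ^ 2 = ∑ i : Fin N, fderiv ℝ w x (EuclideanSpace.single i 1) ^ 2 := by
  rw [← (EuclideanSpace.basisFun (Fin N) ℝ).sum_sq_inner_left]
  simp only [inner_gradient_left, EuclideanSpace.basisFun_apply]

section Green

variable (hΩ : IsOpen Ω) (hw : ContDiffOn ℝ 2 w Ω) (hψ : ContDiff ℝ 1 ψ)
  (hc : HasCompactSupport ψ) (hs : tsupport ψ ⊆ Ω)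

include hΩ hw hψ hc hs

lemma integrable_fderiv_mul_fderiv (e : EuclideanSpace ℝ (Fin N)) :
    Integrable fun x => fderiv ℝ w x e * fderiv ℝ ψ x e :=
  integrable_mul_of_tsupport_subset hΩ
    (contDiffOn_fderiv_apply hΩ hw (m := 1) (by norm_num) e).continuousOn
    (contDiff_fderiv_apply hψ (m := 0) (by norm_num) e).continuous (hc.fderiv_apply ℝ e)
    ((tsupport_fderiv_apply_subset ℝ e).trans hs)

lemma integral_sum_fderiv_mul_fderiv :
    ∫ x, ∑ i : Fin N, fderiv ℝ w x (EuclideanSpace.single i 1)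
      * fderiv ℝ ψ x (EuclideanSpace.single i 1) = ∫ x, -lapl w x * ψ x := by
  have hw' (e) := contDiffOn_fderiv_apply hΩ hw (m := 1) (by norm_num) e
  have hw'' (e) := (contDiffOn_fderiv_apply hΩ (hw' e) (m := 0) (by norm_num) e).continuousOn
  rw [integral_finsetSum _ fun i _ => integrable_fderiv_mul_fderiv hΩ hw hψ hc hs _]
  simp only [integral_mul_fderiv_of_tsupport_subset hΩ (hw' _) hψ hc hs, lapl, neg_mul,
    Finset.sum_mul, integral_neg, Finset.sum_neg_distrib]
  rw [integral_finsetSum _ fun i _ =>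
    integrable_mul_of_tsupport_subset hΩ (hw'' _) hψ.continuous hc hs]

end Green

section Truncation

variable {η : ℝ → ℝ} (hwc : Continuous w) (h0 : ∀ x ∉ Ω, w x = 0) (hη0 : 0 ∉ tsupport η)

include hwc h0 hη0

lemma tsupport_comp_subset_of_zero_notMem : tsupport (fun x => η (w x)) ⊆ Ω := fun x hx => by
  by_contra hxΩ
  exact hη0 (h0 x hxΩ ▸ tsupport_comp_subset_preimage η hwc hx)

variable (hΩ : IsOpen Ω) (hw : ContDiffOn ℝ 2 w Ω) (hη : ContDiff ℝ 1 η)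

include hΩ hw hη

lemma contDiff_comp_of_zero_notMem : ContDiff ℝ 1 fun x => η (w x) := by
  refine contMDiff_iff_contDiff.1 (contMDiff_of_tsupport fun x hx => ContDiffAt.contMDiffAt ?_)
  have hxΩ := tsupport_comp_subset_of_zero_notMem hwc h0 hη0 hx
  exact hη.contDiffAt.comp x ((hw.contDiffAt (hΩ.mem_nhds hxΩ)).of_le one_le_two)

variable (hb : Bornology.IsBounded Ω)

include hb

-- Green's formula with the test function `η ∘ w`, whose support is a compact subset of `Ω`.
lemma integral_norm_gradient_sq_mul_deriv_comp :
    IntegrableOn (fun x => ‖gradient w x‖ ^ 2 * deriv η (w x)) Ω ∧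
      ∫ x in Ω, ‖gradient w x‖ ^ 2 * deriv η (w x) = ∫ x in Ω, -lapl w x * η (w x) := by
  have hψ := contDiff_comp_of_zero_notMem hwc h0 hη0 hΩ hw hη
  have hs := tsupport_comp_subset_of_zero_notMem hwc h0 hη0
  have hψ0 (x) (hx : x ∉ Ω) : η (w x) = 0 :=
    image_eq_zero_of_notMem_tsupport (f := fun x => η (w x)) fun h => hx (hs h)
  have hc := hasCompactSupport_of_eq_zero hb hψ0
  have h_chain : EqOn (fun x => ∑ i : Fin N, fderiv ℝ w x (EuclideanSpace.single i 1)
      * fderiv ℝ (fun x => η (w x)) x (EuclideanSpace.single i 1))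
      (fun x => ‖gradient w x‖ ^ 2 * deriv η (w x)) Ω := fun x hx => by
    have hwx := ((hw.differentiableOn two_ne_zero).differentiableAt (hΩ.mem_nhds hx)).hasFDerivAt
    have h_comp : HasFDerivAt (fun x => η (w x)) _ x :=
      (hη.differentiable one_ne_zero _).hasDerivAt.comp_hasFDerivAt x hwx
    simp only [h_comp.fderiv, smul_apply, smul_eq_mul, norm_gradient_sq, Finset.sum_mul]
    exact Finset.sum_congr rfl fun i _ => by ring
  have h_zero (x) (hx : x ∉ Ω) : ∑ i : Fin N, fderiv ℝ w x (EuclideanSpace.single i 1)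
      * fderiv ℝ (fun x => η (w x)) x (EuclideanSpace.single i 1) = 0 := by
    have h_fderiv := image_eq_zero_of_notMem_tsupport
      fun h => hx ((tsupport_fderiv_subset ℝ).trans hs h)
    simp [h_fderiv]
  constructor
  · exact (integrable_finsetSum _ fun i _ =>
      integrable_fderiv_mul_fderiv hΩ hw hψ hc hs _).integrableOn.congr_fun h_chain hΩ.measurableSet
  · rw [← setIntegral_congr_fun hΩ.measurableSet h_chain,
      setIntegral_eq_integral_of_forall_compl_eq_zero h_zero,
      setIntegral_eq_integral_of_forall_compl_eq_zero fun x hx => by rw [hψ0 x hx, mul_zero],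
      integral_sum_fderiv_mul_fderiv hΩ hw hψ hc hs]

end Truncation

lemma gradNorm2_sq (hΩ : IsOpen Ω) (hb : Bornology.IsBounded Ω) (hwc : Continuous w)
    (h0 : ∀ x ∉ Ω, w x = 0) (h_pos : ∀ x ∈ Ω, 0 < w x) (hw : ContDiffOn ℝ 2 w Ω) {C : ℝ}
    (hC : ∀ x ∈ Ω, |lapl w x| ≤ C) : gradNorm2 Ω w ^ 2 = ∫ x in Ω, -lapl w x * w x := by
  have hw0 (x) : 0 ≤ w x := by
    by_cases hx : x ∈ Ω
    exacts [(h_pos x hx).le, (h0 x hx).ge]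
  have h_energy (n : ℕ) := integral_norm_gradient_sq_mul_deriv_comp hwc h0
    (zero_notMem_tsupport_softThreshold n) hΩ hw (contDiff_softThreshold n) hb
  have h_grad : ContinuousOn (gradient w) Ω :=
    (InnerProductSpace.toDual ℝ _).symm.continuous.comp_continuousOn
      (hw.continuousOn_fderiv_of_isOpen hΩ one_le_two)
  rw [gradNorm2, toReal_eLpNorm_two_sq (h_grad.aestronglyMeasurable hΩ.measurableSet)]
  refine integral_eq_of_monotone_of_tendsto (fun n => (h_energy n).1)
    (fun n x => mul_nonneg (sq_nonneg _) ?_)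
    (fun x m n hmn => mul_le_mul_of_nonneg_left (monotone_deriv_softThreshold (hw0 x) hmn)
      (sq_nonneg _)) ?_ ?_
  · rw [deriv_softThreshold]
    exact smoothTransition.nonneg _
  · refine (ae_restrict_iff' hΩ.measurableSet).2 (ae_of_all _ fun x hx => ?_)
    simpa using (tendsto_deriv_softThreshold (h_pos x hx)).const_mul (‖gradient w x‖ ^ 2)
  · simp only [fun n => (h_energy n).2]
    refine tendsto_integral_of_dominated_convergence (fun x => C * w x) (fun n => ?_)
      ((hwc.integrable_of_hasCompactSupport (hasCompactSupport_of_eq_zero hb h0)).const_mul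
        C).integrableOn (fun n => ?_)
      (ae_of_all _ fun x => (tendsto_softThreshold (hw0 x)).const_mul _)
    · exact ((continuousOn_lapl hΩ hw).neg.mul
        ((contDiff_softThreshold n).continuous.comp hwc).continuousOn).aestronglyMeasurable
        hΩ.measurableSet
    · refine (ae_restrict_iff' hΩ.measurableSet).2 (ae_of_all _ fun x hx => ?_)
      obtain ⟨h_nonneg, h_le⟩ := softThreshold_mem_Icc n (hw0 x)
      rw [norm_mul, norm_neg, Real.norm_of_nonneg h_nonneg]
      exact mul_le_mul (hC x hx) h_le h_nonneg ((abs_nonneg _).trans (hC x hx))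

lemma LpNorm_two_sq (hw : Continuous w) : LpNorm Ω 2 w ^ 2 = ∫ x in Ω, w x ^ 2 := by
  rw [LpNorm, toReal_eLpNorm_two_sq hw.aestronglyMeasurable]
  simp only [Real.norm_eq_abs, sq_abs]

end Energy

section Bumps

lemma hasDerivAt_max_zero_pow (n : ℕ) (s : ℝ) :
    HasDerivAt (fun s : ℝ => max s 0 ^ (n + 2)) ((n + 2) * max s 0 ^ (n + 1)) s := by
  rcases lt_trichotomy s 0 with hs | rfl | hs
  · have h_eq : (fun s : ℝ => max s 0 ^ (n + 2)) =ᶠ[𝓝 s] fun _ => 0 := by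
      filter_upwards [Iio_mem_nhds hs] with r hr
      rw [max_eq_right hr.le, zero_pow (by omega)]
    simpa [max_eq_right hs.le] using (hasDerivAt_const s (0 : ℝ)).congr_of_eventuallyEq h_eq
  · rw [max_self, zero_pow (by omega), mul_zero, hasDerivAt_iff_isLittleO]
    simp only [max_self, sub_zero, smul_zero, zero_pow (by omega : n + 2 ≠ 0)]
    refine (Asymptotics.IsBigO.of_bound' (Eventually.of_forall fun r => ?_)).trans_isLittleO
      (Asymptotics.isLittleO_pow_id (by omega : 1 < n + 2))
    rw [norm_pow, norm_pow]
    exact pow_le_pow_left₀ (norm_nonneg _) (abs_max_le_max_abs_abs.trans (by simp)) _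
  · have h_eq : (fun s : ℝ => max s 0 ^ (n + 2)) =ᶠ[𝓝 s] fun s => s ^ (n + 2) := by
      filter_upwards [Ioi_mem_nhds hs] with r hr
      rw [max_eq_left (mem_Ioi.1 hr).le]
    simpa [max_eq_left hs.le] using (hasDerivAt_pow (n + 2) s).congr_of_eventuallyEq h_eq

lemma deriv_max_zero_pow (n : ℕ) :
    deriv (fun s : ℝ => max s 0 ^ (n + 2)) = fun s : ℝ => (n + 2 : ℝ) * max s 0 ^ (n + 1) :=
  funext fun s => (hasDerivAt_max_zero_pow n s).deriv

lemma contDiff_max_zero_pow_three : ContDiff ℝ 2 fun s : ℝ => max s 0 ^ 3 := by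
  refine contDiff_succ_iff_deriv (n := 1).2
    ⟨fun s => (hasDerivAt_max_zero_pow 1 s).differentiableAt, by simp, ?_⟩
  rw [deriv_max_zero_pow 1]
  refine contDiff_const.mul (contDiff_one_iff_deriv.2
    ⟨fun s => (hasDerivAt_max_zero_pow 0 s).differentiableAt, ?_⟩)
  rw [deriv_max_zero_pow 0]
  fun_prop

variable {N : ℕ} {Ω : Set (EuclideanSpace ℝ (Fin N))} {x₀ x : EuclideanSpace ℝ (Fin N)} {r : ℝ}

lemma contDiff_const_sub_norm_sub_sq (a : ℝ) (x₀ : EuclideanSpace ℝ (Fin N)) :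
    ContDiff ℝ 2 fun z => a - ‖z - x₀‖ ^ 2 :=
  contDiff_const.sub ((contDiff_id.sub contDiff_const).norm_sq ℝ)

lemma fderiv_const_sub_norm_sub_sq_apply (a : ℝ) (x₀ x e : EuclideanSpace ℝ (Fin N)) :
    fderiv ℝ (fun z => a - ‖z - x₀‖ ^ 2) x e = -(2 * ⟪x - x₀, e⟫_ℝ) := by
  have h : HasFDerivAt (fun z => a - ‖z - x₀‖ ^ 2) _ x :=
    (((hasFDerivAt_id x).sub_const x₀).norm_sq).const_sub a
  simp [h.fderiv, inner_sub_left]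

lemma lapl_const_sub_norm_sub_sq (a : ℝ) (x₀ x : EuclideanSpace ℝ (Fin N)) :
    lapl (fun z => a - ‖z - x₀‖ ^ 2) x = -(2 * N) := by
  have h_second (i : Fin N) : fderiv ℝ (fun z => -(2 * ⟪z - x₀, EuclideanSpace.single i 1⟫_ℝ)) x
      (EuclideanSpace.single i 1) = -2 := by
    have h : HasFDerivAt (fun z => -(2 * ⟪z - x₀, EuclideanSpace.single i (1 : ℝ)⟫_ℝ)) _ x :=
      ((((hasFDerivAt_id x).sub_const x₀).inner ℝ (hasFDerivAt_const _ x)).const_mul 2).neg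
    rw [h.fderiv]
    simp
  simp only [lapl, fderiv_const_sub_norm_sub_sq_apply, h_second, Finset.sum_const,
    Finset.card_univ, Fintype.card_fin, smul_neg, nsmul_eq_mul, mul_comm]

/-- The nonnegative `C²` function `(r² - ‖x - x₀‖²)₊³`, a subsolution of an eigenvalue problem that
is supported in the ball of radius `r` about `x₀`. -/
def cubicBump (x₀ : EuclideanSpace ℝ (Fin N)) (r : ℝ) (x : EuclideanSpace ℝ (Fin N)) : ℝ :=
  max (r ^ 2 - ‖x - x₀‖ ^ 2) 0 ^ 3

lemma cubicBump_nonneg (x₀ : EuclideanSpace ℝ (Fin N)) (r : ℝ) (x : EuclideanSpace ℝ (Fin N)) :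
    0 ≤ cubicBump x₀ r x :=
  pow_nonneg (le_max_right _ _) 3

lemma cubicBump_self_pos (hr : 0 < r) : 0 < cubicBump x₀ r x₀ := by
  have h_pos : 0 < r ^ 2 - ‖x₀ - x₀‖ ^ 2 := by simpa using pow_pos hr 2
  exact pow_pos (lt_max_of_lt_left h_pos) 3

lemma cubicBump_eq_zero (hr : 0 ≤ r) (hx : x ∉ closedBall x₀ r) : cubicBump x₀ r x = 0 := by
  rw [mem_closedBall, dist_eq_norm, not_le] at hx
  rw [cubicBump, max_eq_right (sub_nonpos.2 (pow_le_pow_left₀ hr hx.le 2)), zero_pow three_ne_zero]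

lemma contDiff_cubicBump (x₀ : EuclideanSpace ℝ (Fin N)) (r : ℝ) :
    ContDiff ℝ 2 (cubicBump x₀ r) :=
  contDiff_max_zero_pow_three.comp (contDiff_const_sub_norm_sub_sq _ x₀)

lemma lapl_cubicBump (x₀ : EuclideanSpace ℝ (Fin N)) (r : ℝ) (x : EuclideanSpace ℝ (Fin N)) :
    lapl (cubicBump x₀ r) x = 24 * max (r ^ 2 - ‖x - x₀‖ ^ 2) 0 * ‖x - x₀‖ ^ 2
      - 6 * N * max (r ^ 2 - ‖x - x₀‖ ^ 2) 0 ^ 2 := by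
  have h_grad : ∑ i : Fin N, (-(2 * ⟪x - x₀, EuclideanSpace.single i 1⟫_ℝ)) ^ 2
      = 4 * ‖x - x₀‖ ^ 2 := by
    rw [← (EuclideanSpace.basisFun (Fin N) ℝ).sum_sq_inner_left, Finset.mul_sum]
    simp only [EuclideanSpace.basisFun_apply]
    exact Finset.sum_congr rfl fun i _ => by ring
  unfold cubicBump
  rw [lapl_comp contDiff_max_zero_pow_three (contDiff_const_sub_norm_sub_sq _ x₀)]
  have h_deriv : deriv (fun s : ℝ => max s 0 ^ 3) = fun s => 3 * max s 0 ^ 2 := by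
    simpa [show (1 : ℝ) + 2 = 3 by norm_num] using deriv_max_zero_pow 1
  have h_deriv₂ (s : ℝ) : deriv (fun s : ℝ => 3 * max s 0 ^ 2) s = 6 * max s 0 := by
    rw [((hasDerivAt_max_zero_pow 0 s).const_mul 3).deriv]
    simp only [CharP.cast_eq_zero]
    ring
  simp only [h_deriv, h_deriv₂, fderiv_const_sub_norm_sub_sq_apply, h_grad,
    lapl_const_sub_norm_sub_sq]
  ring

-- With `s = (r² - ‖x - x₀‖²)₊` the inequality reads `6 (N + 4) s ≤ K s² + 24 r²`, which is AM-GM.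
lemma neg_lapl_cubicBump_le (hr : 0 < r) (x₀ x : EuclideanSpace ℝ (Fin N)) :
    -lapl (cubicBump x₀ r) x ≤ 3 * (N + 4) ^ 2 / (8 * r ^ 2) * cubicBump x₀ r x := by
  rw [lapl_cubicBump, cubicBump]
  rcases le_total (r ^ 2 - ‖x - x₀‖ ^ 2) 0 with hs | hs
  · simp [max_eq_right hs]
  rw [max_eq_left hs]
  have h_norm : ‖x - x₀‖ ^ 2 = r ^ 2 - (r ^ 2 - ‖x - x₀‖ ^ 2) := by ring
  generalize r ^ 2 - ‖x - x₀‖ ^ 2 = s at hs h_norm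
  rw [h_norm, div_mul_eq_mul_div, le_div_iff₀ (by positivity)]
  have h_square := mul_nonneg hs (sq_nonneg ((N + 4) * s - 8 * r ^ 2))
  linarith

variable (hΩ : IsOpen Ω) (hr : 0 < r) (hs : closedBall x₀ r ⊆ Ω)

include hr in
lemma hasCompactSupport_cubicBump : HasCompactSupport (cubicBump x₀ r) :=
  .intro (isCompact_closedBall x₀ r) fun _ hx => cubicBump_eq_zero hr.le hx

include hr in
lemma boundedMeasurable_neg_lapl_cubicBump :
    BoundedMeasurable fun x => -lapl (cubicBump x₀ r) x :=
  .of_hasCompactSupport (continuous_lapl (contDiff_cubicBump x₀ r)).neg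
    (hasCompactSupport_lapl (hasCompactSupport_cubicBump hr)).neg

include hΩ hr hs in
lemma isDirichletSolution_cubicBump :
    IsDirichletSolution Ω (cubicBump x₀ r) fun x => -lapl (cubicBump x₀ r) x where
  continuous := (contDiff_cubicBump x₀ r).continuous
  eq_zero _ hx := cubicBump_eq_zero hr.le (notMem_subset hs hx)
  isMeanValueSolution := isMeanValueSolution_of_contDiffOn hΩ
    (.of_hasCompactSupport (contDiff_cubicBump x₀ r).continuous (hasCompactSupport_cubicBump hr))
    (boundedMeasurable_neg_lapl_cubicBump hr) (contDiff_cubicBump x₀ r).contDiffOn fun _ _ => rfl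

end Bumps

section KirchhoffEquation

variable {N : ℕ} {Ω : Set (EuclideanSpace ℝ (Fin N))} {ξ u : EuclideanSpace ℝ (Fin N) → ℝ}
  {F : ℝ → ℝ} {α t X M : ℝ}

namespace IsMaximalSolution

section Positivity

variable (hξ : IsDirichletSolution Ω ξ fun _ => 1) (hΩ : IsOpen Ω) (hb : Bornology.IsBounded Ω)
  (hu : IsMaximalSolution Ω ξ F t M u) (ht : 0 < t) (hM : 0 < M)
  (hF : ∀ K > 0, ∃ ε > 0, ∀ s ∈ Icc 0 ε, K * s ≤ F s)

include hξ hΩ hb hu ht hM hF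

lemma exists_pos_mul_le {φ h : EuclideanSpace ℝ (Fin N) → ℝ} {K : ℝ}
    (hφ : IsDirichletSolution Ω φ h) (hh : BoundedMeasurable h) (hφ0 : ∀ x, 0 ≤ φ x) (hK : 0 < K)
    (hhφ : ∀ x ∈ Ω, h x ≤ K * φ x) : ∃ ε > 0, ∀ x, ε * φ x ≤ u x := by
  obtain ⟨B, hB⟩ := (hφ.boundedMeasurable hb).bounded
  obtain ⟨C, hC⟩ := hh.bounded
  obtain ⟨δ, hδ, hFδ⟩ := hF (K * M) (mul_pos hK hM)
  obtain ⟨ε, hε, h_small⟩ := exists_pos_mul_lt (lt_min hδ ht) (max B C)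
  have h_scale {a D : ℝ} (ha : |a| ≤ D) (hD : D ≤ max B C) : ε * a ≤ min δ t := by
    refine le_trans ?_ h_small.le
    rw [mul_comm]
    exact mul_le_mul_of_nonneg_right ((le_abs_self a).trans (ha.trans hD)) hε.le
  have hεh : BoundedMeasurable fun x => ε * h x := hh.const_mul ε
  refine ⟨ε, hε, hu.le_of_subsolution _ _ (hφ.const_mul ε) hεh (fun x =>
    ⟨mul_nonneg hε.le (hφ0 x), ?_⟩) fun x hx => ?_⟩
  · exact IsDirichletSolution.mono hξ (hφ.const_mul ε) (hξ.const_mul t) hΩ hb hεh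
      (.const (t * 1)) (fun z _ => by
        rw [mul_one]
        exact (h_scale (hC z) (le_max_right B C)).trans (min_le_right δ t)) x
  · have h_le := hFδ (ε * φ x) ⟨mul_nonneg hε.le (hφ0 x),
      (h_scale (hB x) (le_max_left B C)).trans (min_le_left δ t)⟩
    rw [le_div_iff₀ hM]
    calc ε * h x * M ≤ ε * (K * φ x) * M := by gcongr; exact hhφ x hx
      _ = K * M * (ε * φ x) := by ring
      _ ≤ F (ε * φ x) := h_le

lemma pos {x : EuclideanSpace ℝ (Fin N)} (hx : x ∈ Ω) : 0 < u x := by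
  obtain ⟨r, hr, hs⟩ := nhds_basis_closedBall.mem_iff.1 (hΩ.mem_nhds hx)
  obtain ⟨ε, hε, h_le⟩ := exists_pos_mul_le hξ hΩ hb hu ht hM hF
    (isDirichletSolution_cubicBump hΩ hr hs) (boundedMeasurable_neg_lapl_cubicBump hr)
    (cubicBump_nonneg x r) (by positivity) fun z _ => neg_lapl_cubicBump_le hr x z
  exact (mul_pos hε (cubicBump_self_pos hr)).trans_le (h_le x)

end Positivity

variable (hu : IsMaximalSolution Ω ξ F t M u) (hΩ : IsOpen Ω)
  (hF : IsSublinearNonlinearity F α t X) (hX : ∀ x, ξ x ≤ X) (hM : 1 ≤ M)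
  (h_pos : ∀ x ∈ Ω, 0 < u x) (hF1 : ContDiffOn ℝ 1 F (Ioi 0))

include hu hΩ hF hX hM h_pos hF1

lemma contDiffOn_two (hb : Bornology.IsBounded Ω) : ContDiffOn ℝ 2 u Ω := by
  have hu_bdd := hu.isDirichletSolution.boundedMeasurable hb
  have h_rhs := boundedMeasurable_nonlinearity hF hX hM hu.mem_torsionInterval
  have hu1 : ContDiffOn ℝ 1 u Ω :=
    contDiffOn_one_of_mean_value hu.isDirichletSolution.isMeanValueSolution hΩ hu_bdd h_rhs
  exact hu.isDirichletSolution.isMeanValueSolution.contDiffOn_two hΩ hu_bdd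
    ((hF1.comp hu1 h_pos).div_const M)

lemma neg_lapl_eq (hb : Bornology.IsBounded Ω) {x : EuclideanSpace ℝ (Fin N)} (hx : x ∈ Ω) :
    -lapl u x = F (u x) / M :=
  hu.isDirichletSolution.isMeanValueSolution.neg_lapl_eq hΩ
    (boundedMeasurable_nonlinearity hF hX hM hu.mem_torsionInterval)
    ((hF.continuous.comp hu.isDirichletSolution.continuous).div_const M).continuousOn
    (hu.contDiffOn_two hΩ hF hX hM h_pos hF1 hb) hx

lemma gradNorm2_sq (hb : Bornology.IsBounded Ω) :
    gradNorm2 Ω u ^ 2 = ∫ x in Ω, F (u x) / M * u x := by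
  have h_lapl {x} (hx : x ∈ Ω) := hu.neg_lapl_eq hΩ hF hX hM h_pos hF1 hb hx
  rw [_root_.gradNorm2_sq hΩ hb hu.isDirichletSolution.continuous hu.isDirichletSolution.eq_zero
    h_pos (hu.contDiffOn_two hΩ hF hX hM h_pos hF1 hb) (C := t) fun x hx => ?_]
  · exact setIntegral_congr_fun hΩ.measurableSet fun x hx => by simp only [h_lapl hx]
  · rw [← abs_neg, h_lapl hx]
    exact hF.abs_div_le hM (mem_Icc_of_mem_torsionInterval hF.pos.le hX (hu.mem_Icc x))

end IsMaximalSolution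

lemma exists_kirchhoff_solution (hξ : IsDirichletSolution Ω ξ fun _ => 1) (hΩ : IsOpen Ω)
    (hb : Bornology.IsBounded Ω) (hX : ∀ x, ξ x ≤ X) (hF : IsSublinearNonlinearity F α t X)
    (hF0 : ∀ K > 0, ∃ ε > 0, ∀ s ∈ Icc 0 ε, K * s ≤ F s) (hF1 : ContDiffOn ℝ 1 F (Ioi 0))
    {c d : ℝ} (hc : 0 ≤ c) (hd : 0 ≤ d) :
    ∃ u : EuclideanSpace ℝ (Fin N) → ℝ, Continuous u ∧ ContDiffOn ℝ 2 u Ω ∧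
      (∀ x ∈ Ω, (-(1 + c * LpNorm Ω 2 u ^ 2 + d * gradNorm2 Ω u ^ 2)) * lapl u x = F (u x)) ∧
      (∀ x ∈ Ω, 0 < u x) ∧ ∀ x ∉ Ω, u x = 0 := by
  obtain ⟨M, u, hM, hu, hu_eq⟩ := exists_isMaximalSolution_parameter_eq hξ hΩ hb hF hX hc hd
  have hM0 : 0 < M := zero_lt_one.trans_le hM
  have hu_cont : Continuous u := hu.isDirichletSolution.continuous
  have h_pos (x) (hx : x ∈ Ω) : 0 < u x := hu.pos hξ hΩ hb hF.pos hM0 hF0 hx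
  have h_int {f : EuclideanSpace ℝ (Fin N) → ℝ} (hf : Continuous f) : IntegrableOn f Ω :=
    (hf.continuousOn.integrableOn_compact hb.isCompact_closure).mono_set subset_closure
  have h_sq : IntegrableOn (fun x => c * u x ^ 2) Ω := h_int ((hu_cont.pow 2).const_mul c)
  have h_energy : IntegrableOn (fun x => d * (F (u x) / M * u x)) Ω :=
    h_int ((((hF.continuous.comp hu_cont).div_const M).mul hu_cont).const_mul d)
  have h_coeff : 1 + c * LpNorm Ω 2 u ^ 2 + d * gradNorm2 Ω u ^ 2 = M := by
    rw [LpNorm_two_sq hu_cont, hu.gradNorm2_sq hΩ hF hX hM h_pos hF1 hb, ← integral_const_mul,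
      ← integral_const_mul, add_assoc, ← integral_add h_sq h_energy, hu_eq]
  refine ⟨u, hu_cont, hu.contDiffOn_two hΩ hF hX hM h_pos hF1 hb, fun x hx => ?_, h_pos,
    hu.isDirichletSolution.eq_zero⟩
  rw [h_coeff, neg_mul_comm, hu.neg_lapl_eq hΩ hF hX hM h_pos hF1 hb hx, mul_div_cancel₀ _ hM0.ne']

end KirchhoffEquation

section ConcaveConvex

/-- The concave-convex nonlinearity `s ↦ μ s ^ q + s ^ p`, of interest for `0 < q < 1 < p`. -/
def concaveConvex (μ q p s : ℝ) : ℝ := μ * s ^ q + s ^ p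

variable {μ q p α κ A K X s τ : ℝ}

lemma continuous_concaveConvex (hq : 0 ≤ q) (hp : 0 ≤ p) : Continuous (concaveConvex μ q p) :=
  ((continuous_rpow_const hq).const_mul μ).add (continuous_rpow_const hp)

lemma monotoneOn_concaveConvex (hμ : 0 ≤ μ) (hq : 0 ≤ q) (hp : 0 ≤ p) :
    MonotoneOn (concaveConvex μ q p) (Ici 0) := fun _ ha _ _ hab =>
  add_le_add (mul_le_mul_of_nonneg_left (rpow_le_rpow ha hab hq) hμ) (rpow_le_rpow ha hab hp)

lemma concaveConvex_zero (hq : q ≠ 0) (hp : p ≠ 0) : concaveConvex μ q p 0 = 0 := by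
  rw [concaveConvex, zero_rpow hq, zero_rpow hp, mul_zero, add_zero]

lemma contDiffOn_concaveConvex : ContDiffOn ℝ 1 (concaveConvex μ q p) (Ioi 0) := fun _ hs =>
  ((contDiffAt_const.mul (contDiffAt_id.rpow_const_of_ne (ne_of_gt hs))).add
    (contDiffAt_id.rpow_const_of_ne (ne_of_gt hs))).contDiffWithinAt

lemma mul_le_concaveConvex (hs : 0 < s) (h : K * s ^ (1 - q) ≤ μ) :
    K * s ≤ concaveConvex μ q p s := by
  calc K * s = K * s ^ (1 - q) * s ^ q := by
        rw [mul_assoc, ← rpow_add hs, sub_add_cancel, rpow_one]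
    _ ≤ μ * s ^ q := by gcongr
    _ ≤ μ * s ^ q + s ^ p := le_add_of_nonneg_right (rpow_nonneg hs.le p)

lemma exists_mul_le_concaveConvex (hμ : 0 < μ) (hq0 : q ≠ 0) (hq1 : q < 1) (hp : p ≠ 0)
    (K : ℝ) : ∃ ε > 0, ∀ s ∈ Icc 0 ε, K * s ≤ concaveConvex μ q p s := by
  have h_lim : Tendsto (fun s : ℝ => K * s ^ (1 - q)) (𝓝 0) (𝓝 0) := by
    have h := ((continuous_rpow_const (sub_pos.2 hq1).le).const_mul K).tendsto (0 : ℝ)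
    rwa [zero_rpow (sub_pos.2 hq1).ne', mul_zero] at h
  obtain ⟨ε, hε, h_small⟩ := nhds_basis_closedBall.mem_iff.1 (h_lim.eventually (gt_mem_nhds hμ))
  refine ⟨ε, hε, fun s ⟨hs0, hsε⟩ => ?_⟩
  rcases hs0.eq_or_lt with rfl | hs
  · rw [mul_zero, concaveConvex_zero hq0 hp]
  · refine mul_le_concaveConvex hs (le_of_lt (h_small ?_))
    rwa [mem_closedBall_zero_iff, norm_of_nonneg hs0]

lemma concaveConvex_le_div (hX : 0 < X) (hs : 0 < s) (h_convex : s ^ (p - q) ≤ μ)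
    (h_eq : s ^ (1 - q) = 2 * X * μ) : concaveConvex μ q p s ≤ s / X := by
  rw [le_div_iff₀ hX]
  calc (μ * s ^ q + s ^ p) * X = (μ + s ^ (p - q)) * s ^ q * X := by
        rw [add_mul μ (s ^ (p - q)), ← rpow_add hs, sub_add_cancel]
    _ ≤ (μ + μ) * s ^ q * X := by gcongr
    _ = s ^ (1 - q) * s ^ q := by rw [h_eq]; ring
    _ = s := by rw [← rpow_add hs, sub_add_cancel, rpow_one]

lemma rpow_sub_rpow_le (hqα : q < α) (hαp : α < p) (hτ : 0 < τ) :
    τ ^ α - τ ^ p ≤ (p - α) / (α - q) * (τ ^ q - τ ^ α) := by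
  have hα : 0 < α - q := sub_pos.2 hqα
  have hp : 0 < p - α := sub_pos.2 hαp
  have h_exp (β : ℝ) : τ ^ α * (log τ * (β - α) + 1) ≤ τ ^ β := by
    calc τ ^ α * (log τ * (β - α) + 1) ≤ τ ^ α * exp (log τ * (β - α)) := by
          gcongr; exact add_one_le_exp _
      _ = τ ^ β := by rw [← rpow_def_of_pos hτ, ← rpow_add hτ, add_sub_cancel]
  calc τ ^ α - τ ^ p ≤ τ ^ α * (log τ * (α - p)) := by linarith [h_exp p]
    _ = (p - α) / (α - q) * (τ ^ α * (log τ * (q - α))) := by field_simp; ring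
    _ ≤ (p - α) / (α - q) * (τ ^ q - τ ^ α) :=
        mul_le_mul_of_nonneg_left (by linarith [h_exp q]) (div_pos hp hα).le

lemma rpow_mul_concaveConvex_le (hq : q ≠ 0) (hp : p ≠ 0) (hqα : q < α) (hαp : α < p)
    (hs : 0 ≤ s) (hsμ : (p - α) / (α - q) * s ^ (p - q) ≤ μ) (hτ : 0 < τ) (hτ1 : τ ≤ 1) :
    τ ^ α * concaveConvex μ q p s ≤ concaveConvex μ q p (τ * s) := by
  rcases hs.eq_or_lt with rfl | hs
  · simp only [mul_zero, concaveConvex_zero hq hp, le_refl]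
  have h_anti : τ ^ α ≤ τ ^ q := rpow_le_rpow_of_exponent_ge hτ hτ1 hqα.le
  have h_convex : s ^ p * (τ ^ α - τ ^ p) ≤ μ * s ^ q * (τ ^ q - τ ^ α) := by
    calc s ^ p * (τ ^ α - τ ^ p) ≤ s ^ p * ((p - α) / (α - q) * (τ ^ q - τ ^ α)) := by
          gcongr; exact rpow_sub_rpow_le hqα hαp hτ
      _ = (p - α) / (α - q) * s ^ (p - q) * s ^ q * (τ ^ q - τ ^ α) := by
          rw [mul_assoc _ (s ^ (p - q)), ← rpow_add hs, sub_add_cancel]; ring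
      _ ≤ μ * s ^ q * (τ ^ q - τ ^ α) := by
          have := sub_nonneg.2 h_anti
          gcongr
  rw [concaveConvex, concaveConvex, mul_rpow hτ.le hs.le, mul_rpow hτ.le hs.le]
  linarith

lemma exists_pos_forall_mul_rpow_le (hκ : 1 < κ) (A : ℝ) :
    ∃ μ₀ > 0, ∀ μ, 0 < μ → μ < μ₀ → A * μ ^ κ ≤ μ := by
  have hκ' : 0 < κ - 1 := sub_pos.2 hκ
  have h_lim : Tendsto (fun μ : ℝ => A * μ ^ (κ - 1)) (𝓝 0) (𝓝 0) := by
    have h := ((continuous_rpow_const hκ'.le).const_mul A).tendsto (0 : ℝ)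
    rwa [zero_rpow hκ'.ne', mul_zero] at h
  obtain ⟨μ₀, hμ₀, h_small⟩ := nhds_basis_ball.mem_iff.1 (h_lim.eventually (gt_mem_nhds one_pos))
  refine ⟨μ₀, hμ₀, fun μ hμ hμlt => ?_⟩
  have h_lt_one : A * μ ^ (κ - 1) < 1 := h_small (by
    rwa [mem_ball_zero_iff, norm_of_nonneg hμ.le])
  calc A * μ ^ κ = A * μ ^ (κ - 1) * μ := by rw [mul_assoc, ← rpow_add_one hμ.ne', sub_add_cancel]
    _ ≤ 1 * μ := by gcongr
    _ = μ := one_mul μ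

lemma isSublinearNonlinearity_concaveConvex (hq0 : 0 < q) (hqα : q < α) (hα1 : α < 1) (hp : 1 < p)
    (hX : 0 < X) (hμ : 0 < μ) (hs : 0 < s) (hsμ : (1 + (p - α) / (α - q)) * s ^ (p - q) ≤ μ)
    (h_eq : s ^ (1 - q) = 2 * X * μ) :
    IsSublinearNonlinearity (concaveConvex μ q p) α (s / X) X := by
  have hp0 : 0 < p := one_pos.trans hp
  have hαp : α < p := hα1.trans hp
  have h_ratio : 0 < (p - α) / (α - q) := div_pos (sub_pos.2 hαp) (sub_pos.2 hqα)
  have h_nonneg : 0 ≤ s ^ (p - q) := rpow_nonneg hs.le _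
  rw [add_mul, one_mul] at hsμ
  have h_range : s / X * X = s := div_mul_cancel₀ s hX.ne'
  refine ⟨continuous_concaveConvex hq0.le hp0.le, monotoneOn_concaveConvex hμ.le hq0.le hp0.le,
    concaveConvex_zero hq0.ne' hp0.ne', div_pos hs hX, ?_, hα1, fun τ r hτ hτ1 hr => ?_⟩
  · rw [h_range]
    exact concaveConvex_le_div hX hs (by nlinarith) h_eq
  · rw [h_range] at hr
    refine rpow_mul_concaveConvex_le hq0.ne' hp0.ne' hqα hαp hr.1 ?_ hτ hτ1
    calc (p - α) / (α - q) * r ^ (p - q) ≤ (p - α) / (α - q) * s ^ (p - q) := by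
          gcongr
          exacts [hr.1, (sub_pos.2 (hqα.trans hαp)).le, hr.2]
      _ ≤ μ := by linarith

lemma exists_isSublinearNonlinearity_concaveConvex (hq0 : 0 < q) (hq1 : q < 1) (hp : 1 < p)
    (hX : 0 < X) : ∃ μ₀ > 0, ∀ μ, 0 < μ → μ < μ₀ →
      ∃ α t, IsSublinearNonlinearity (concaveConvex μ q p) α t X := by
  obtain ⟨α, hqα, hα1⟩ := exists_between hq1
  have h1q : 0 < 1 - q := sub_pos.2 hq1
  have hκ : 1 < (p - q) / (1 - q) := by rw [one_lt_div h1q]; linarith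
  obtain ⟨μ₀, hμ₀, h_le⟩ := exists_pos_forall_mul_rpow_le hκ
    ((1 + (p - α) / (α - q)) * (2 * X) ^ ((p - q) / (1 - q)))
  refine ⟨μ₀, hμ₀, fun μ hμ hμlt => ⟨α, (2 * X * μ) ^ (1 / (1 - q)) / X, ?_⟩⟩
  refine isSublinearNonlinearity_concaveConvex hq0 hqα hα1 hp hX hμ (by positivity) ?_ ?_
  · rw [← rpow_mul (by positivity), one_div_mul_eq_div, mul_rpow (by positivity) hμ.le,
      ← mul_assoc]
    exact h_le μ hμ hμlt
  · rw [← rpow_mul (by positivity), one_div_mul_cancel h1q.ne', rpow_one]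

end ConcaveConvex

theorem stmt_5_general {N : ℕ} (Ω : Set (EuclideanSpace ℝ (Fin N))) (hΩo : IsOpen Ω)
    (hΩbd : Bornology.IsBounded Ω) (c d q p : ℝ) (hc : 0 ≤ c) (hd : 0 ≤ d) (hq0 : 0 < q)
    (hq1 : q < 1) (hp : 1 < p) (ξ : EuclideanSpace ℝ (Fin N) → ℝ) (hξ : IsTorsionFn Ω ξ) :
    ∃ μ₀ : ℝ, 0 < μ₀ ∧ ∀ μ : ℝ, 0 < μ → μ < μ₀ →
      ∃ u : EuclideanSpace ℝ (Fin N) → ℝ,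
        ContinuousOn u (closure Ω) ∧ ContDiffOn ℝ 2 u Ω ∧
        (∀ x ∈ Ω, (-(1 + c * (LpNorm Ω 2 u) ^ 2 + d * (gradNorm2 Ω u) ^ 2)) * lapl u x
          = μ * u x ^ q + u x ^ p) ∧
        (∀ x ∈ Ω, 0 < u x) ∧
        (∀ x ∈ frontier Ω, u x = 0) := by
  obtain ⟨hξ_cont, hξ_diff, -, hξ_lapl, hξ_zero⟩ := hξ
  have h_torsion : IsDirichletSolution Ω (Ω.indicator ξ) fun _ => 1 :=
    isDirichletSolution_indicator hΩo hΩbd hξ_cont hξ_diff hξ_zero (.const 1) hξ_lapl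
  obtain ⟨C, hC⟩ := (h_torsion.boundedMeasurable hΩbd).bounded
  have hX (x) : Ω.indicator ξ x ≤ |C| + 1 :=
    (le_abs_self _).trans ((hC x).trans ((le_abs_self C).trans (lt_add_one _).le))
  obtain ⟨μ₀, hμ₀, h_small⟩ := exists_isSublinearNonlinearity_concaveConvex hq0 hq1 hp
    (by positivity : 0 < |C| + 1)
  refine ⟨μ₀, hμ₀, fun μ hμ hμlt => ?_⟩
  obtain ⟨α, t, hF⟩ := h_small μ hμ hμlt
  obtain ⟨u, hu_cont, hu_diff, hu_eq, hu_pos, hu_zero⟩ := exists_kirchhoff_solution h_torsion hΩo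
    hΩbd hX hF (fun K _ => exists_mul_le_concaveConvex hμ hq0.ne' hq1 (one_pos.trans hp).ne' K)
    contDiffOn_concaveConvex hc hd
  refine ⟨u, hu_cont.continuousOn, hu_diff, hu_eq, hu_pos, fun x hx => hu_zero x ?_⟩
  exact (hΩo.frontier_eq ▸ hx).2

end

/-- Theorem 2.2: for small `μ > 0`, the Kirchhoff–Carrier problem with concave-convex
nonlinearity `-(1 + c‖u‖₂² + d‖∇u‖₂²) Δu = μ u^q + u^p`, `u > 0` in `Ω`, `u = 0` on `∂Ω`,
has a classical solution. -/
theorem stmt_5 {N : ℕ} (hN : 1 ≤ N) (Ω : Set (EuclideanSpace ℝ (Fin N)))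
    (hΩo : IsOpen Ω) (hΩconn : IsConnected Ω) (hΩbd : Bornology.IsBounded Ω)
    (c d q p : ℝ) (hc : 0 < c) (hd : 0 < d) (hq0 : 0 < q) (hq1 : q < 1) (hp : 1 < p)
    (l : ℝ) (φ₁ : EuclideanSpace ℝ (Fin N) → ℝ) (heig : IsFirstEigenpair Ω l φ₁)
    (ξ : EuclideanSpace ℝ (Fin N) → ℝ) (hξ : IsTorsionFn Ω ξ) :
    ∃ μ₀ : ℝ, 0 < μ₀ ∧ ∀ μ : ℝ, 0 < μ → μ < μ₀ →
      ∃ u : EuclideanSpace ℝ (Fin N) → ℝ,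
        ContinuousOn u (closure Ω) ∧ ContDiffOn ℝ 2 u Ω ∧
        (∀ x ∈ Ω, (-(1 + c * (LpNorm Ω 2 u) ^ 2 + d * (gradNorm2 Ω u) ^ 2)) * lapl u x
          = μ * u x ^ q + u x ^ p) ∧
        (∀ x ∈ Ω, 0 < u x) ∧
        (∀ x ∈ frontier Ω, u x = 0) := by
  exact stmt_5_general Ω hΩo hΩbd c d q p hc.le hd.le hq0 hq1 hp ξ hξ
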